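/- For every positive integer m, every standard index-m form φ with finite part Φ := φ − A_{2,m}, and every unordered factorization m = m₁·m₂, one has R_{m₁,m₂}(Φ) = (m₁ + m₂)/12. -/

import Mathlib

noncomputable section

open Complex Filter Topology MeasureTheory
open scoped Classical

/-- `ee x = e^{2πix}`. -/
def ee (x : ℂ) : ℂ := Complex.exp (2 * (Real.pi : ℂ) * Complex.I * x)

/-- The index-`m` elliptic transformation law on `ℍ × ℂ`. -/
def EllipticLaw (m : ℕ) (φ : ℂ → ℂ → ℂ) : Prop :=
  ∀ τ : ℂ, 0 < τ.im → ∀ z : ℂ, ∀ lam mu : ℤ,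
    φ τ (z + (lam : ℂ) * τ + (mu : ℂ)) =
      ee (-(m : ℂ) * ((lam : ℂ) ^ 2 * τ + 2 * (lam : ℂ) * z)) * φ τ z

/-- The weight-`k` index-`m` modular transformation law on `ℍ × ℂ`. -/
def ModularLaw (k : ℤ) (m : ℕ) (φ : ℂ → ℂ → ℂ) : Prop :=
  ∀ τ : ℂ, 0 < τ.im → ∀ z : ℂ, ∀ a b c d : ℤ, a * d - b * c = 1 →
    φ (((a : ℂ) * τ + (b : ℂ)) / ((c : ℂ) * τ + (d : ℂ))) (z / ((c : ℂ) * τ + (d : ℂ))) =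
      ((c : ℂ) * τ + (d : ℂ)) ^ k *
        ee ((m : ℂ) * (c : ℂ) * z ^ 2 / ((c : ℂ) * τ + (d : ℂ))) * φ τ z

/-- The theta function `θ_{m,ℓ}(τ,z) = ∑_{r ≡ ℓ (mod 2m)} q^{r²/4m} y^r`. -/
def jTheta (m : ℕ) (l : ℤ) (τ z : ℂ) : ℂ :=
  ∑' n : ℤ, ee (((l : ℂ) + 2 * (m : ℂ) * (n : ℂ)) ^ 2 / (4 * (m : ℂ)) * τ +
      ((l : ℂ) + 2 * (m : ℂ) * (n : ℂ)) * z)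

/-- The point `z_s = ατ + β` for `s = (α,β) ∈ ℚ²`. -/
def zpt (s : ℚ × ℚ) (τ : ℂ) : ℂ := (s.1 : ℚ) * τ + (s.2 : ℚ)

/-- The Appell–Lerch sum `A_{2,m}(τ,z) = ∑_{s∈ℤ} q^{ms²+s}·y^{2ms+1}/(1-q^s y)²`. -/
def A2sum (m : ℕ) (τ z : ℂ) : ℂ :=
  ∑' s : ℤ, ee (((m : ℂ) * (s : ℂ) ^ 2 + (s : ℂ)) * τ + (2 * (m : ℂ) * (s : ℂ) + 1) * z) /
      (1 - ee ((s : ℂ) * τ + z)) ^ 2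

/-- A standard index-`m` form: a function on `ℍ × ℂ` satisfying the weight-2 index-`m`
modular law and the index-`m` elliptic law, holomorphic away from `z ∈ ℤτ + ℤ`, and such
that `z ↦ φ(τ,z) - (2πiz)^{-2}` extends holomorphically across `z = 0`. -/
def IsStandardForm (m : ℕ) (φ : ℂ → ℂ → ℂ) : Prop :=
  ModularLaw 2 m φ ∧ EllipticLaw m φ ∧
  (∀ τ : ℂ, 0 < τ.im → ∀ z : ℂ, (∀ lam mu : ℤ, z ≠ (lam : ℂ) * τ + (mu : ℂ)) →
    DifferentiableAt ℂ (fun p : ℂ × ℂ => φ p.1 p.2) (τ, z)) ∧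
  (∀ τ : ℂ, 0 < τ.im → ∃ g : ℂ → ℂ, AnalyticAt ℂ g 0 ∧
    ∀ᶠ z in 𝓝[≠] (0 : ℂ), φ τ z - 1 / (2 * (Real.pi : ℂ) * Complex.I * z) ^ 2 = g z)

/-- `C` is the Fourier coefficient data of the finite part `Φ = φ - A_{2,m}` of the
standard index-`m` form `φ`. -/
def IsFinitePartCoeffs (m : ℕ) (φ : ℂ → ℂ → ℂ) (C : ℤ → ℤ → ℂ) : Prop :=
  (∀ Δ l : ℤ, C Δ (l + 2 * (m : ℤ)) = C Δ l) ∧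
  (∀ Δ l : ℤ, ¬ (4 * (m : ℤ)) ∣ (Δ + l ^ 2) → C Δ l = 0) ∧
  (∀ τ : ℂ, 0 < τ.im → ∀ z : ℂ, (∀ lam mu : ℤ, z ≠ (lam : ℂ) * τ + (mu : ℂ)) →
    HasSum (fun p : ℤ × ℤ => C (4 * (m : ℤ) * p.1 - p.2 ^ 2) p.2 *
      ee ((p.1 : ℂ) * τ + (p.2 : ℂ) * z)) (φ τ z - A2sum m τ z))

/-- A representative `ℓ* = ℓ·(a·x - b·y)` (with `ax + by = gcd(a,b) = 1`) of the residue
class determined by `ℓ* ≡ -ℓ (mod 2a)`, `ℓ* ≡ ℓ (mod 2b)`, used to define the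
Atkin–Lehner involution `W_a` on coefficients. -/
def lstar (a b : ℕ) (l : ℤ) : ℤ := l * ((a : ℤ) * Nat.gcdA a b - (b : ℤ) * Nat.gcdB a b)

/-- The coefficients of `φ|u_t` (index `m/t²`):
`C_{φ|u_t}(Δ,ℓ) = ∑_{r mod 2m/t, r ≡ ℓ (mod 2m/t²)} C_φ(Δt², rt)`. -/
def CoeffU (m t : ℕ) (C : ℤ → ℤ → ℂ) (Δ l : ℤ) : ℂ :=
  ∑ j ∈ Finset.range t,
    C (Δ * (t : ℤ) ^ 2) ((l + 2 * (m : ℤ) / (t : ℤ) ^ 2 * (j : ℤ)) * (t : ℤ))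

/-- For an unordered factorization `m = m₁·m₂` with `t = gcd(m₁,m₂)`,
`R_{m₁,m₂}(φ) = R[(φ|u_t)|W_{m₁/t}] = ∑_{r∈ℤ} C_{(φ|u_t)|W_{m₁/t}}(-r², r)`. -/
def Rfactor (m : ℕ) (C : ℤ → ℤ → ℂ) (m₁ m₂ : ℕ) : ℂ :=
  ∑' r : ℤ, CoeffU m (Nat.gcd m₁ m₂) C (-(r ^ 2))
      (lstar (m₁ / Nat.gcd m₁ m₂) (m₂ / Nat.gcd m₁ m₂) r)

/-!
Write `m = MK` and sum the values of `φ` over all `M`-torsion points of `ℂ / (ℤτ + ℤ)`, replacing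
the value at the pole `z = 0` by the constant Laurent coefficient. Away from `0` the modular law
permutes these values; the Laurent coefficient picks up an anomaly from the index factor
`e(mcz² / (cτ + d))` acting on the pole `(2πiz)⁻²`. So the sum `f` behaves like the Eisenstein
series `G₂`: `f(τ + 1) = f(τ)` and `f(-1/τ) = τ² f(τ) + MK τ / (2πi)`. Integrating `f` from
`e^{2πi/3}` to `e^{πi/3} = -1 / e^{2πi/3}` turns this anomaly into the value `MK/12` of its constant
term.

The constant term can also be read off from `φ = Φ + A_{2,m}`. Summing over the torsion points
`(lτ + μ)/M` with fixed `l` keeps the terms `c(n, r)` of `Φ` with `M ∣ r + Kl`, and the constant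
term those with `Mn + l(r + Kl) = 0`; Bézout coordinates identify their total with `M R_{M,K}(Φ)`.
The Appell–Lerch sum contributes `∑_{μ ≠ 0} y / (1 - y)²` at `y = e(μ/M)`, which is `(1 - M²)/12`,
and its Laurent coefficient at `0` contributes `-1/12`. Comparing, `R_{M,K}(Φ) = (M + K)/12`.
-/

lemma ee_add (x y : ℂ) : ee (x + y) = ee x * ee y := by
  simp only [ee, mul_add, Complex.exp_add]

lemma ee_intCast (n : ℤ) : ee n = 1 := by
  rw [ee, mul_comm, Complex.exp_int_mul_two_pi_mul_I]

lemma ee_zero : ee 0 = 1 := by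
  simp only [ee, mul_zero, Complex.exp_zero]

lemma ee_add_intCast (x : ℂ) (n : ℤ) : ee (x + n) = ee x := by
  rw [ee_add, ee_intCast, mul_one]

lemma ee_neg (x : ℂ) : ee (-x) = (ee x)⁻¹ := by
  simp only [ee, mul_neg, Complex.exp_neg]

lemma ee_ne_zero (x : ℂ) : ee x ≠ 0 := Complex.exp_ne_zero _

lemma ee_natCast_mul (n : ℕ) (x : ℂ) : ee (n * x) = ee x ^ n := by
  rw [ee, ee, ← Complex.exp_nat_mul, mul_left_comm]

lemma norm_ee (x : ℂ) : ‖ee x‖ = Real.exp (-(2 * Real.pi * x.im)) := by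
  simp [ee, Complex.norm_exp]

lemma ee_eq_one_iff {x : ℂ} : ee x = 1 ↔ ∃ n : ℤ, x = n := by
  simp only [ee, Complex.exp_eq_one_iff, mul_comm _ x, mul_left_inj' Complex.two_pi_I_ne_zero]

@[fun_prop]
lemma differentiable_ee : Differentiable ℂ ee := by
  unfold ee
  fun_prop

@[fun_prop]
lemma continuous_ee : Continuous ee := differentiable_ee.continuous

lemma sum_ee_mul_val_div (M : ℕ) [NeZero M] (k : ℤ) :
    ∑ μ : ZMod M, ee (k * (μ.val : ℂ) / M) = if (M : ℤ) ∣ k then (M : ℂ) else 0 := by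
  have hchar (μ : ZMod M) : ee (k * (μ.val : ℂ) / M) = ZMod.stdAddChar (μ * (k : ZMod M)) := by
    have hcast : μ * (k : ZMod M) = ((k * (μ.val : ℤ) : ℤ) : ZMod M) := by
      push_cast
      rw [ZMod.natCast_zmod_val, mul_comm]
    rw [hcast, ZMod.stdAddChar_coe, ee]
    push_cast
    ring_nf
  simp_rw [hchar, AddChar.sum_mulShift _ (ZMod.isPrimitive_stdAddChar M), ZMod.card,
    ZMod.intCast_zmod_eq_zero_iff_dvd]
  push_cast
  rfl

open UpperHalfPlane (upperHalfPlaneSet)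

/-- `f` is holomorphic on the upper half plane and its mean over the horizontal segment from `y i`
to `w + y i` is `c` for every height `y > 0`. For a Fourier series in `q^{1/w}` this says that `c`
is the constant term. -/
structure HasConstantTerm (w : ℕ) (f : ℂ → ℂ) (c : ℂ) : Prop where
  differentiableOn : DifferentiableOn ℂ f upperHalfPlaneSet
  integral_eq : ∀ y : ℝ, 0 < y → ∫ x in (0 : ℝ)..w, f (x + y * I) = w * c

/-- Normal convergence of `∑ i, f i` on every horizontal strip of the upper half plane. -/
def StripSummable {ι : Type*} (f : ι → ℂ → ℂ) : Prop :=
  ∀ y₁ y₂ : ℝ, 0 < y₁ → ∃ u : ι → ℝ, Summable u ∧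
    ∀ i τ, y₁ < τ.im → τ.im < y₂ → ‖f i τ‖ ≤ u i

lemma StripSummable.comp_injective {ι κ : Type*} {f : ι → ℂ → ℂ} (hf : StripSummable f) {e : κ → ι}
    (he : Function.Injective e) : StripSummable fun k ↦ f (e k) := fun y₁ y₂ hy₁ ↦
  let ⟨u, hu, hbound⟩ := hf y₁ y₂ hy₁
  ⟨u ∘ e, hu.comp_injective he, fun k ↦ hbound (e k)⟩

namespace HasConstantTerm

variable {w : ℕ} {f g : ℂ → ℂ} {c d : ℂ}

lemma continuous_comp_line (hf : HasConstantTerm w f c) {y : ℝ} (hy : 0 < y) :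
    Continuous fun x : ℝ ↦ f (x + y * I) :=
  hf.differentiableOn.continuousOn.comp_continuous (by fun_prop) fun x ↦ by
    simpa [upperHalfPlaneSet] using hy

lemma intervalIntegrable (hf : HasConstantTerm w f c) {y : ℝ} (hy : 0 < y) (a b : ℝ) :
    IntervalIntegrable (fun x : ℝ ↦ f (x + y * I)) volume a b :=
  (hf.continuous_comp_line hy).intervalIntegrable a b

lemma congr (hf : HasConstantTerm w f c) (h : Set.EqOn g f upperHalfPlaneSet) :
    HasConstantTerm w g c where
  differentiableOn := hf.differentiableOn.congr h
  integral_eq y hy := by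
    rw [← hf.integral_eq y hy]
    exact intervalIntegral.integral_congr fun x _ ↦ h (by simpa [upperHalfPlaneSet] using hy)

lemma const (w : ℕ) (c : ℂ) : HasConstantTerm w (fun _ ↦ c) c where
  differentiableOn := differentiableOn_const c
  integral_eq y _ := by simp

lemma add (hf : HasConstantTerm w f c) (hg : HasConstantTerm w g d) :
    HasConstantTerm w (fun τ ↦ f τ + g τ) (c + d) where
  differentiableOn := hf.differentiableOn.add hg.differentiableOn
  integral_eq y hy := by
    rw [intervalIntegral.integral_add (hf.intervalIntegrable hy _ _) (hg.intervalIntegrable hy _ _),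
      hf.integral_eq y hy, hg.integral_eq y hy, mul_add]

lemma const_mul (a : ℂ) (hf : HasConstantTerm w f c) :
    HasConstantTerm w (fun τ ↦ a * f τ) (a * c) where
  differentiableOn := hf.differentiableOn.const_mul a
  integral_eq y hy := by
    rw [intervalIntegral.integral_const_mul, hf.integral_eq y hy, mul_left_comm]

lemma sum {ι : Type*} (s : Finset ι) {f : ι → ℂ → ℂ} {c : ι → ℂ}
    (hf : ∀ i, HasConstantTerm w (f i) (c i)) :
    HasConstantTerm w (fun τ ↦ ∑ i ∈ s, f i τ) (∑ i ∈ s, c i) := by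
  induction s using Finset.induction_on with
  | empty => simpa using const w 0
  | insert i s hi ih => simpa only [Finset.sum_insert hi] using (hf i).add ih

lemma ee_mul_div (w : ℕ) [NeZero w] (n : ℤ) :
    HasConstantTerm w (fun τ ↦ ee (n * τ / w)) (if n = 0 then 1 else 0) where
  differentiableOn := by fun_prop
  integral_eq y _ := by
    have hw : (w : ℂ) ≠ 0 := NeZero.ne _
    split_ifs with hn
    · simp [hn, ee_zero]
    have hfreq : 2 * (Real.pi : ℂ) * I * n / w ≠ 0 :=
      div_ne_zero (mul_ne_zero Complex.two_pi_I_ne_zero (mod_cast hn)) hw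
    have hline (x : ℝ) : ee (n * (x + y * I) / w) =
        ee (n * (y * I) / w) * Complex.exp (2 * (Real.pi : ℂ) * I * n / w * x) := by
      rw [mul_add, add_div, ee_add, mul_comm, ee, ee]
      ring_nf
    have hperiod : Complex.exp (2 * (Real.pi : ℂ) * I * n / w * w) = 1 := by
      rw [div_mul_cancel₀ _ hw]
      exact ee_intCast n
    simp_rw [hline]
    rw [intervalIntegral.integral_const_mul, integral_exp_mul_complex hfreq]
    push_cast
    rw [hperiod]
    simp

section Series

variable {ι : Type*} [Countable ι] {f : ι → ℂ → ℂ} {c : ι → ℂ}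

lemma hasSum_of_stripSummable [NeZero w] (hf : ∀ i, HasConstantTerm w (f i) (c i))
    (hs : StripSummable f) {y : ℝ} (hy : 0 < y) :
    HasSum c ((w : ℂ)⁻¹ * ∫ x in (0 : ℝ)..w, ∑' i, f i (x + y * I)) := by
  obtain ⟨u, hu, hbound⟩ := hs (y / 2) (y + 1) (by positivity)
  have hline (i : ι) (x : ℝ) : ‖f i (x + y * I)‖ ≤ u i :=
    hbound i _ (by simp [hy]) (by simp)
  have hsum := intervalIntegral.hasSum_integral_of_dominated_convergence (μ := volume)
    (a := 0) (b := w) (fun i _ ↦ u i)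
    (fun i ↦ ((hf i).continuous_comp_line hy).aestronglyMeasurable)
    (fun i ↦ ae_of_all _ fun x _ ↦ hline i x) (ae_of_all _ fun _ _ ↦ hu)
    intervalIntegrable_const
    (ae_of_all _ fun x _ ↦ (hu.of_norm_bounded fun i ↦ hline i x).hasSum)
  simp_rw [fun i ↦ (hf i).integral_eq y hy] at hsum
  have hw : (w : ℂ) ≠ 0 := NeZero.ne _
  simpa [inv_mul_cancel_left₀ hw] using hsum.mul_left (w : ℂ)⁻¹

lemma summable_of_stripSummable [NeZero w] (hf : ∀ i, HasConstantTerm w (f i) (c i))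
    (hs : StripSummable f) : Summable c :=
  (hasSum_of_stripSummable hf hs one_pos).summable

lemma tsum [NeZero w] (hf : ∀ i, HasConstantTerm w (f i) (c i)) (hs : StripSummable f) :
    HasConstantTerm w (fun τ ↦ ∑' i, f i τ) (∑' i, c i) where
  differentiableOn τ hτ := by
    obtain ⟨u, hu, hbound⟩ := hs (τ.im / 2) (τ.im + 1) (half_pos hτ)
    have hopen : IsOpen {σ : ℂ | τ.im / 2 < σ.im ∧ σ.im < τ.im + 1} :=
      (isOpen_lt continuous_const Complex.continuous_im).inter
        (isOpen_lt Complex.continuous_im continuous_const)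
    have hmem : {σ : ℂ | τ.im / 2 < σ.im ∧ σ.im < τ.im + 1} ∈ 𝓝 τ :=
      hopen.mem_nhds ⟨half_lt_self hτ, lt_add_one _⟩
    have hdiff := differentiableOn_tsum_of_summable_norm hu
      (fun i ↦ (hf i).differentiableOn.mono fun σ hσ ↦ (half_pos hτ).trans hσ.1) hopen
      fun i σ hσ ↦ hbound i σ hσ.1 hσ.2
    exact (hdiff.differentiableAt hmem).differentiableWithinAt
  integral_eq y hy := by
    have hw : (w : ℂ) ≠ 0 := NeZero.ne _
    rw [(hasSum_of_stripSummable hf hs hy).tsum_eq, mul_inv_cancel_left₀ hw]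

end Series

end HasConstantTerm

section FourierSeries

variable {ι : Type*} {a : ι → ℂ} {n : ι → ℤ} {w : ℕ}

lemma stripSummable_mul_ee (h : ∀ τ : ℂ, 0 < τ.im → Summable fun i ↦ a i * ee (n i * τ / w)) :
    StripSummable fun i τ ↦ a i * ee (n i * τ / w) := by
  intro y₁ y₂ hy₁
  rcases le_or_gt y₂ y₁ with hy | hy
  · exact ⟨0, summable_zero, fun i τ h₁ h₂ ↦ absurd (h₁.trans h₂) hy.not_gt⟩
  have hnorm (i : ι) (τ : ℂ) :
      ‖a i * ee (n i * τ / w)‖ = ‖a i‖ * Real.exp (-(2 * Real.pi * (n i / w)) * τ.im) := by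
    rw [norm_mul, norm_ee, mul_div_right_comm]
    congr 2
    have hcast : (n i : ℂ) / w = ((n i / w : ℝ) : ℂ) := by push_cast; rfl
    rw [hcast, Complex.im_ofReal_mul]
    ring
  refine ⟨fun i ↦ ‖a i * ee (n i * (y₁ * I) / w)‖ + ‖a i * ee (n i * (y₂ * I) / w)‖,
    (h _ (by simpa using hy₁)).norm.add (h _ (by simpa using hy₁.trans hy)).norm,
    fun i τ h₁ h₂ ↦ ?_⟩
  simp only [hnorm, ← mul_add]
  refine mul_le_mul_of_nonneg_left ?_ (norm_nonneg _)
  simp only [Complex.im_ofReal_mul, Complex.I_im, mul_one]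
  -- `exp (- s y)` is monotone in `y`, so it is bounded by its value at an end of the strip.
  rcases le_total 0 (-(2 * Real.pi * (n i / w))) with hs | hs
  · exact (Real.exp_le_exp.2 (mul_le_mul_of_nonneg_left h₂.le hs)).trans
      (le_add_of_nonneg_left (Real.exp_pos _).le)
  · exact (Real.exp_le_exp.2 (mul_le_mul_of_nonpos_left h₁.le hs)).trans
      (le_add_of_nonneg_right (Real.exp_pos _).le)

lemma hasConstantTerm_mul_ee [NeZero w] (i : ι) :
    HasConstantTerm w (fun τ ↦ a i * ee (n i * τ / w)) (if n i = 0 then a i else 0) := by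
  simpa using (HasConstantTerm.ee_mul_div w (n i)).const_mul (a i)

end FourierSeries

section Contour

/-- The disc `|τ|² + 1 < (5/2) Im τ`, a hyperbolic disc about the fixed point `i` of `τ ↦ -1/τ`. It
contains the arc of `Im τ = √3/2` from `e^{2πi/3}` to `e^{πi/3}`, and Mathlib provides primitives on
discs. -/
def inversionDisc : Set ℂ := Metric.ball (5 / 4 * I) (3 / 4)

lemma mem_inversionDisc {τ : ℂ} : τ ∈ inversionDisc ↔ Complex.normSq τ + 1 < 5 / 2 * τ.im := by
  have hdist : ‖τ - 5 / 4 * I‖ ^ 2 = Complex.normSq τ - 5 / 2 * τ.im + 25 / 16 := by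
    have hcenter : (5 / 4 * I : ℂ) = (5 / 4 : ℝ) * I := by push_cast; rfl
    rw [← Complex.normSq_eq_norm_sq, hcenter, Complex.normSq_apply, Complex.normSq_apply]
    simp only [Complex.sub_re, Complex.sub_im, Complex.re_ofReal_mul, Complex.im_ofReal_mul,
      Complex.I_re, Complex.I_im]
    ring
  rw [inversionDisc, Metric.mem_ball, dist_eq_norm, ← sq_lt_sq₀ (norm_nonneg _) (by norm_num),
    hdist]
  constructor <;> intro h <;> linarith

lemma im_pos_of_mem_inversionDisc {τ : ℂ} (hτ : τ ∈ inversionDisc) : 0 < τ.im := by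
  have := mem_inversionDisc.1 hτ
  linarith [Complex.normSq_nonneg τ]

lemma ne_zero_of_im_pos {τ : ℂ} (hτ : 0 < τ.im) : τ ≠ 0 := by
  rintro rfl
  exact lt_irrefl _ hτ

lemma neg_inv_mem_inversionDisc {τ : ℂ} (hτ : τ ∈ inversionDisc) : -τ⁻¹ ∈ inversionDisc := by
  have hpos : 0 < Complex.normSq τ :=
    Complex.normSq_pos.2 (ne_zero_of_im_pos (im_pos_of_mem_inversionDisc hτ))
  rw [mem_inversionDisc] at hτ ⊢
  rw [Complex.normSq_neg, map_inv₀, Complex.neg_im, Complex.inv_im, neg_div, neg_neg,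
    ← mul_div_assoc, lt_div_iff₀ hpos, add_mul, inv_mul_cancel₀ hpos.ne']
  linarith

lemma I_mem_inversionDisc : I ∈ inversionDisc := by
  rw [mem_inversionDisc]
  norm_num

variable {f G : ℂ → ℂ} {κ : ℂ}

lemma primitive_neg_inv (hG : ∀ τ ∈ inversionDisc, HasDerivAt G (f τ) τ)
    (hS : ∀ τ : ℂ, 0 < τ.im → f (-τ⁻¹) = τ ^ 2 * f τ + κ * τ) {τ : ℂ} (hτ : τ ∈ inversionDisc) :
    G (-τ⁻¹) = G τ + κ * (Complex.log τ - Real.pi / 2 * I) := by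
  have hderiv (σ : ℂ) (hσ : σ ∈ inversionDisc) :
      HasDerivAt (fun σ ↦ G (-σ⁻¹) - G σ - κ * Complex.log σ) 0 σ := by
    have him := im_pos_of_mem_inversionDisc hσ
    have hσ0 := ne_zero_of_im_pos him
    have hcomp := (hG _ (neg_inv_mem_inversionDisc hσ)).comp σ (hasDerivAt_inv hσ0).neg
    have hlog := (Complex.hasDerivAt_log (Or.inr him.ne')).const_mul κ
    refine ((hcomp.sub (hG σ hσ)).sub hlog).congr_deriv ?_
    rw [hS σ him]
    field_simp
    ring
  have hconst := (convex_ball _ _).is_const_of_fderivWithin_eq_zero (𝕜 := ℂ)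
    (fun σ hσ ↦ (hderiv σ hσ).differentiableAt.differentiableWithinAt)
    (fun σ hσ ↦ by
      rw [fderivWithin_of_isOpen Metric.isOpen_ball hσ]
      ext
      simpa using (hderiv σ hσ).deriv) hτ I_mem_inversionDisc
  have hI : -I⁻¹ = I := by simp
  simp only [hI, Complex.log_I] at hconst
  linear_combination hconst

/-- The point `e^{πi/3} = 1/2 + (√3/2) i`. -/
def sixthRoot : ℂ := ((1 / 2 : ℝ) : ℂ) + (√3 / 2 : ℝ) * I

lemma log_sixthRoot : Complex.log sixthRoot = Real.pi / 3 * I := by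
  have hexp : sixthRoot = Complex.exp ((Real.pi / 3 : ℝ) * I) := by
    rw [Complex.exp_mul_I, ← Complex.ofReal_cos, ← Complex.ofReal_sin, Real.cos_pi_div_three,
      Real.sin_pi_div_three, sixthRoot]
  rw [hexp, Complex.log_exp] <;> simp <;> linarith [Real.pi_pos]

lemma neg_inv_sixthRoot : -sixthRoot⁻¹ = ((-(1 / 2) : ℝ) : ℂ) + (√3 / 2 : ℝ) * I := by
  have hsqrt : √3 * √3 = 3 := Real.mul_self_sqrt (by norm_num)
  rw [← inv_neg]
  refine inv_eq_of_mul_eq_one_right (Complex.ext ?_ ?_) <;> simp [sixthRoot] <;> linarith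

lemma integral_eq_of_neg_inv (hf : DifferentiableOn ℂ f upperHalfPlaneSet)
    (hS : ∀ τ : ℂ, 0 < τ.im → f (-τ⁻¹) = τ ^ 2 * f τ + κ * τ) :
    ∫ x in (-(1 / 2) : ℝ)..(1 / 2), f (x + (√3 / 2 : ℝ) * I) = κ * Real.pi * I / 6 := by
  have hmem (x : ℝ) (hx : x ∈ Set.uIcc (-(1 / 2)) (1 / 2)) :
      (x + (√3 / 2 : ℝ) * I : ℂ) ∈ inversionDisc := by
    have hsqrt : √3 * √3 = 3 := Real.mul_self_sqrt (by norm_num)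
    have hlt : 5 / 3 < √3 := Real.lt_sqrt_of_sq_lt (by norm_num)
    rw [Set.uIcc_of_le (by norm_num)] at hx
    rw [mem_inversionDisc, Complex.normSq_add_mul_I]
    simp only [Complex.add_im, Complex.ofReal_im, Complex.im_ofReal_mul, Complex.I_im]
    nlinarith [hx.1, hx.2]
  have hdisc : DifferentiableOn ℂ f inversionDisc := hf.mono fun τ ↦ im_pos_of_mem_inversionDisc
  obtain ⟨G, hG⟩ := DifferentiableOn.isExactOn_ball (f := f) (c := 5 / 4 * I) (r := 3 / 4) hdisc
  have hline (x : ℝ) (hx : x ∈ Set.uIcc (-(1 / 2)) (1 / 2)) :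
      HasDerivAt (fun x : ℝ ↦ G (x + (√3 / 2 : ℝ) * I)) (f (x + (√3 / 2 : ℝ) * I)) x := by
    have hadd : HasDerivAt (fun z : ℂ ↦ G (z + (√3 / 2 : ℝ) * I)) (f (x + (√3 / 2 : ℝ) * I)) x :=
      (hG _ (hmem x hx)).comp_add_const _ _
    exact hadd.comp_ofReal
  have hcont : ContinuousOn (fun x : ℝ ↦ f (x + (√3 / 2 : ℝ) * I)) (Set.uIcc (-(1 / 2)) (1 / 2)) :=
    hf.continuousOn.comp (by fun_prop) fun x hx ↦ im_pos_of_mem_inversionDisc (hmem x hx)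
  have hinv := primitive_neg_inv hG hS (hmem (1 / 2) (by simp))
  rw [intervalIntegral.integral_eq_sub_of_hasDerivAt hline hcont.intervalIntegrable]
  rw [← sixthRoot, neg_inv_sixthRoot, log_sixthRoot] at hinv
  rw [← sixthRoot, hinv]
  ring

/- A primitive `G` of `f` satisfies `G(-1/τ) - G(τ) = κ log(τ/i)`, and for `τ = e^{πi/3}` the
points `-1/τ` and `τ` are the ends of a horizontal segment of length one. -/
theorem HasConstantTerm.eq_of_quasimodular {w : ℕ} [NeZero w] {c : ℂ} (hf : HasConstantTerm w f c)
    (hT : ∀ τ : ℂ, 0 < τ.im → f (τ + 1) = f τ)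
    (hS : ∀ τ : ℂ, 0 < τ.im → f (-τ⁻¹) = τ ^ 2 * f τ + κ * τ) : c = κ * Real.pi * I / 6 := by
  have hy : (0 : ℝ) < √3 / 2 := by positivity
  have hper : Function.Periodic (fun x : ℝ ↦ f (x + (√3 / 2 : ℝ) * I)) 1 := fun x ↦ by
    have := hT (x + (√3 / 2 : ℝ) * I) (by simp)
    simp only [Complex.ofReal_add, Complex.ofReal_one]
    rw [add_right_comm, this]
  have hfold := hper.intervalIntegral_add_zsmul_eq w 0 (hf.intervalIntegrable hy)
  have hshift := hper.intervalIntegral_add_eq 0 (-(1 / 2))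
  have hw : (w : ℂ) ≠ 0 := NeZero.ne _
  simp only [zsmul_eq_mul, Int.cast_natCast, zero_add, mul_one] at hfold hshift
  rw [hf.integral_eq _ hy, hshift, show -(1 / 2) + 1 = (1 / 2 : ℝ) by norm_num,
    integral_eq_of_neg_inv hf.differentiableOn hS] at hfold
  exact mul_left_cancel₀ hw hfold

end Contour

section LerchKernel

lemma tendsto_const_mul_nhdsNE_zero {c : ℂ} (hc : c ≠ 0) :
    Tendsto (fun z ↦ c * z) (𝓝[≠] 0) (𝓝[≠] 0) := by
  refine tendsto_nhdsWithin_iff.2 ⟨tendsto_nhdsWithin_of_tendsto_nhds ?_, ?_⟩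
  · simpa using (continuous_const_mul c).tendsto 0
  · filter_upwards [self_mem_nhdsWithin] with z hz using mul_ne_zero hc hz

lemma tendsto_sinh_div_self : Tendsto (fun w : ℂ ↦ Complex.sinh w / w) (𝓝[≠] 0) (𝓝 1) := by
  simpa [slope_fun_def_field, div_eq_inv_mul] using (Complex.hasDerivAt_sinh 0).tendsto_slope

lemma norm_sinh_sub_le (w : ℂ) :
    ‖Complex.sinh w - w - w ^ 3 / 6‖ ≤ ‖w‖ ^ 4 * Real.exp ‖w‖ := by
  have htaylor (x : ℂ) (hx : ‖x‖ = ‖w‖) :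
      ‖Complex.exp x - (1 + x + x ^ 2 / 2 + x ^ 3 / 6)‖ ≤ ‖w‖ ^ 4 * Real.exp ‖w‖ := by
    simpa [Finset.sum_range_succ, Nat.factorial, hx] using
      Complex.norm_exp_sub_sum_le_norm_mul_exp x 4
  have hsplit : Complex.sinh w - w - w ^ 3 / 6 =
      (Complex.exp w - (1 + w + w ^ 2 / 2 + w ^ 3 / 6)) / 2 -
        (Complex.exp (-w) - (1 + -w + (-w) ^ 2 / 2 + (-w) ^ 3 / 6)) / 2 := by
    rw [Complex.sinh]
    ring
  rw [hsplit]
  refine (norm_sub_le _ _).trans ?_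
  rw [norm_div, norm_div, Complex.norm_ofNat]
  linarith [htaylor w rfl, htaylor (-w) (norm_neg w)]

lemma tendsto_sinh_sub_self_div_pow :
    Tendsto (fun w : ℂ ↦ (Complex.sinh w - w) / w ^ 3) (𝓝[≠] 0) (𝓝 (1 / 6)) := by
  rw [tendsto_iff_norm_sub_tendsto_zero]
  have hbound : Tendsto (fun w : ℂ ↦ ‖w‖ * Real.exp ‖w‖) (𝓝[≠] 0) (𝓝 0) :=
    tendsto_nhdsWithin_of_tendsto_nhds (by
      simpa using (show Continuous fun w : ℂ ↦ ‖w‖ * Real.exp ‖w‖ by fun_prop).tendsto 0)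
  refine squeeze_zero' (Eventually.of_forall fun _ ↦ norm_nonneg _) ?_ hbound
  filter_upwards [self_mem_nhdsWithin] with w hw
  have hw0 : w ≠ 0 := hw
  have hsplit : (Complex.sinh w - w) / w ^ 3 - 1 / 6 =
      (Complex.sinh w - w - w ^ 3 / 6) / w ^ 3 := by
    field_simp
  rw [hsplit, norm_div, norm_pow, div_le_iff₀ (by positivity)]
  exact (norm_sinh_sub_le w).trans_eq (by ring)

lemma tendsto_inv_sinh_sq_sub :
    Tendsto (fun w : ℂ ↦ 1 / (4 * Complex.sinh w ^ 2) - 1 / (4 * w ^ 2)) (𝓝[≠] 0)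
      (𝓝 (-1 / 12)) := by
  have hsinh := tendsto_sinh_div_self
  have hlim := ((tendsto_sinh_sub_self_div_pow.mul (hsinh.add_const 1)).mul
    ((hsinh.inv₀ one_ne_zero).pow 2)).const_mul (-1 / 4)
  rw [show (-1 / 4 : ℂ) * (1 / 6 * (1 + 1) * 1⁻¹ ^ 2) = -1 / 12 by norm_num] at hlim
  have hne : ∀ᶠ w in 𝓝[≠] (0 : ℂ), Complex.sinh w / w ≠ 0 :=
    hsinh.eventually_ne one_ne_zero
  refine hlim.congr' ?_
  filter_upwards [self_mem_nhdsWithin, hne] with w hw hw'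
  have hw0 : w ≠ 0 := hw
  have hs : Complex.sinh w ≠ 0 := fun h ↦ hw' (by simp [h])
  field_simp
  ring

/-- The function `v ↦ y / (1 - y)²` with `y = e^{2πiv}`, of which `A_{2,m}` is a theta-like average.
The division gives the value `0` at its poles `v ∈ ℤ`. -/
def lerchKernel (v : ℂ) : ℂ := ee v / (1 - ee v) ^ 2

lemma lerchKernel_intCast (n : ℤ) : lerchKernel n = 0 := by
  simp [lerchKernel, ee_intCast]

lemma lerchKernel_neg (v : ℂ) : lerchKernel (-v) = lerchKernel v := by
  rcases eq_or_ne (ee v) 1 with h | h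
  · simp [lerchKernel, ee_neg, h]
  have hv := ee_ne_zero v
  have h1 : 1 - ee v ≠ 0 := sub_ne_zero.2 h.symm
  have h2 : ee v - 1 ≠ 0 := sub_ne_zero.2 h
  rw [lerchKernel, lerchKernel, ee_neg]
  field_simp
  ring

lemma norm_ee_lt_one {v : ℂ} (hv : 0 < v.im) : ‖ee v‖ < 1 := by
  rw [norm_ee, Real.exp_lt_one_iff, neg_lt_zero]
  positivity

lemma continuousAt_lerchKernel {v : ℂ} (hv : ∀ n : ℤ, v ≠ n) : ContinuousAt lerchKernel v := by
  have hden : (1 - ee v) ^ 2 ≠ 0 :=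
    pow_ne_zero 2 (sub_ne_zero.2 fun h ↦ let ⟨n, hn⟩ := ee_eq_one_iff.1 h.symm; hv n hn)
  unfold lerchKernel
  fun_prop (disch := exact hden)

lemma hasSum_lerchKernel {v : ℂ} (hv : 0 < v.im) :
    HasSum (fun k : ℕ ↦ (k : ℂ) * ee (k * v)) (lerchKernel v) := by
  simp only [ee_natCast_mul]
  exact hasSum_coe_mul_geometric_of_norm_lt_one (norm_ee_lt_one hv)

lemma norm_lerchKernel_le {v : ℂ} {r : ℝ} (hr : r < 1) (hv : ‖ee v‖ ≤ r) :
    ‖lerchKernel v‖ ≤ r / (1 - r) ^ 2 := by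
  rw [lerchKernel, norm_div, norm_pow]
  have hden : 1 - r ≤ ‖1 - ee v‖ := by
    have := norm_sub_norm_le 1 (ee v)
    rw [norm_one] at this
    linarith
  have : 0 < 1 - r := sub_pos.2 hr
  have hr0 : 0 ≤ r := (norm_nonneg _).trans hv
  gcongr

lemma tendsto_lerchKernel_sub :
    Tendsto (fun z : ℂ ↦ lerchKernel z - 1 / (2 * Real.pi * I * z) ^ 2) (𝓝[≠] 0)
      (𝓝 (-1 / 12)) := by
  have hscale := tendsto_const_mul_nhdsNE_zero (c := Real.pi * I) (by simp [Real.pi_ne_zero])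
  refine (tendsto_inv_sinh_sq_sub.comp hscale).congr fun z ↦ ?_
  have hsinh : lerchKernel z = 1 / (4 * Complex.sinh (Real.pi * I * z) ^ 2) := by
    have hee : ee z = Complex.exp (Real.pi * I * z) ^ 2 := by
      rw [ee, ← Complex.exp_nat_mul]
      push_cast
      ring_nf
    have hexp := Complex.exp_ne_zero (Real.pi * I * z)
    have hden : 4 * Complex.sinh (Real.pi * I * z) ^ 2 = (1 - ee z) ^ 2 / ee z := by
      rw [hee, Complex.sinh, Complex.exp_neg]
      field_simp
      ring
    rw [hden, one_div_div, lerchKernel]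
  rw [Function.comp_apply, hsinh]
  ring

lemma sum_lerchKernel_add_div (M : ℕ) [NeZero M] {z : ℂ} (hz : 0 < z.im) :
    ∑ μ : ZMod M, lerchKernel (z + (μ.val : ℂ) / M) = (M : ℂ) ^ 2 * lerchKernel (M * z) := by
  have him (μ : ZMod M) : (z + (μ.val : ℂ) / M).im = z.im := by
    simp only [Complex.add_im, Complex.div_natCast_im, Complex.natCast_im, zero_div, add_zero]
  have hlhs := hasSum_sum (s := Finset.univ) fun μ (_ : μ ∈ Finset.univ) ↦
    hasSum_lerchKernel ((him μ).symm ▸ hz)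
  have hterm (k : ℕ) : ∑ μ : ZMod M, (k : ℂ) * ee (k * (z + (μ.val : ℂ) / M)) =
      k * ee (k * z) * if (M : ℤ) ∣ k then (M : ℂ) else 0 := by
    rw [← sum_ee_mul_val_div M k, Finset.mul_sum]
    refine Finset.sum_congr rfl fun μ _ ↦ ?_
    rw [mul_add, ee_add, mul_assoc, mul_div_assoc, Int.cast_natCast]
  simp_rw [hterm] at hlhs
  rw [← (mul_right_injective₀ (NeZero.ne M)).hasSum_iff] at hlhs
  · have hMz : 0 < (M * z).im := by
      simpa using mul_pos (Nat.cast_pos.2 (NeZero.pos M)) hz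
    refine hlhs.unique (((hasSum_lerchKernel hMz).mul_left ((M : ℂ) ^ 2)).congr_fun fun j ↦ ?_)
    simp only [Function.comp_apply, Nat.cast_mul, dvd_mul_right, if_true]
    ring_nf
  · intro k hk
    rw [if_neg, mul_zero]
    exact fun h ↦ hk (Set.mem_range.2 ((Int.natCast_dvd_natCast.1 h).imp fun _ ↦ Eq.symm))

lemma val_div_ne_intCast {M : ℕ} [NeZero M] {μ : ZMod M} (hμ : μ ≠ 0) (n : ℤ) :
    (μ.val : ℂ) / M ≠ n := by
  rw [Ne, div_eq_iff (NeZero.ne _)]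
  intro h
  have hdvd : (M : ℤ) ∣ (μ.val : ℤ) := ⟨n, by rw [mul_comm]; exact_mod_cast h⟩
  exact hμ ((ZMod.val_eq_zero μ).1
    (Nat.eq_zero_of_dvd_of_lt (Int.natCast_dvd_natCast.1 hdvd) μ.val_lt))

lemma tendsto_sq_mul_lerchKernel_sub (M : ℕ) [NeZero M] :
    Tendsto (fun t : ℝ ↦ (M : ℂ) ^ 2 * lerchKernel (M * (t * I)) - lerchKernel (t * I)) (𝓝[>] 0)
      (𝓝 ((1 - (M : ℂ) ^ 2) / 12)) := by
  have hM : (M : ℂ) ≠ 0 := NeZero.ne _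
  have hvert : Tendsto (fun t : ℝ ↦ t * I) (𝓝[>] 0) (𝓝[≠] 0) := by
    refine tendsto_nhdsWithin_iff.2 ⟨tendsto_nhdsWithin_of_tendsto_nhds ?_, ?_⟩
    · simpa using (show Continuous fun t : ℝ ↦ (t * I : ℂ) by fun_prop).tendsto 0
    · filter_upwards [self_mem_nhdsWithin] with t ht
      simpa using (Set.mem_Ioi.1 ht).ne'
  have hlim := ((tendsto_lerchKernel_sub.comp ((tendsto_const_mul_nhdsNE_zero hM).comp hvert)
    ).const_mul ((M : ℂ) ^ 2)).sub (tendsto_lerchKernel_sub.comp hvert)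
  rw [show (M : ℂ) ^ 2 * (-1 / 12) - -1 / 12 = (1 - (M : ℂ) ^ 2) / 12 by ring] at hlim
  refine hlim.congr fun t ↦ ?_
  simp only [Function.comp_apply]
  field_simp
  ring

lemma sum_lerchKernel_div (M : ℕ) [NeZero M] :
    ∑ μ : ZMod M, lerchKernel ((μ.val : ℂ) / M) = (1 - (M : ℂ) ^ 2) / 12 := by
  have hrest : Tendsto (fun t : ℝ ↦ (M : ℂ) ^ 2 * lerchKernel (M * (t * I)) - lerchKernel (t * I))
      (𝓝[>] 0) (𝓝 (∑ μ ∈ Finset.univ.erase (0 : ZMod M), lerchKernel ((μ.val : ℂ) / M))) := by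
    have hcont (μ : ZMod M) (hμ : μ ∈ Finset.univ.erase 0) :
        Tendsto (fun t : ℝ ↦ lerchKernel (t * I + (μ.val : ℂ) / M)) (𝓝[>] 0)
          (𝓝 (lerchKernel ((μ.val : ℂ) / M))) := by
      have hμ' := val_div_ne_intCast (Finset.ne_of_mem_erase hμ)
      refine (continuousAt_lerchKernel hμ').tendsto.comp (tendsto_nhdsWithin_of_tendsto_nhds ?_)
      simpa using (show Continuous fun t : ℝ ↦ (t * I : ℂ) + (μ.val : ℂ) / M by fun_prop).tendsto 0
    refine (tendsto_finsetSum _ hcont).congr' ?_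
    filter_upwards [self_mem_nhdsWithin] with t ht
    rw [← sum_lerchKernel_add_div M (by simpa using ht),
      ← Finset.sum_erase_add _ _ (Finset.mem_univ 0)]
    simp
  have hzero : lerchKernel (((0 : ZMod M).val : ℂ) / M) = 0 := by
    simpa using lerchKernel_intCast 0
  rw [← Finset.add_sum_erase _ _ (Finset.mem_univ 0), hzero, zero_add]
  exact tendsto_nhds_unique hrest (tendsto_sq_mul_lerchKernel_sub M)

end LerchKernel

section Torsion

/-- The theta-normalised value of `φ` at the `M`-torsion point `z = (lτ + μ)/M`: the factor
`e^{2πiKlz}` makes it depend only on `(l, μ)` mod `M` when `φ` is elliptic of index `MK`. -/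
def torsionValue (M K : ℕ) (φ : ℂ → ℂ → ℂ) (l μ : ℤ) (τ : ℂ) : ℂ :=
  ee (K * l * ((l * τ + μ) / M)) * φ τ ((l * τ + μ) / M)

variable {M K : ℕ} {φ : ℂ → ℂ → ℂ}

lemma torsionValue_add_mul [NeZero M] (hφ : EllipticLaw (M * K) φ) {τ : ℂ} (hτ : 0 < τ.im)
    (l μ i j : ℤ) :
    torsionValue M K φ (l + i * M) (μ + j * M) τ = torsionValue M K φ l μ τ := by
  have hM : (M : ℂ) ≠ 0 := NeZero.ne _
  set z : ℂ := (l * τ + μ) / M with hz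
  have hzM : z * M = l * τ + μ := div_mul_cancel₀ _ hM
  have hpt : (((l + i * M : ℤ) : ℂ) * τ + (μ + j * M : ℤ)) / M = z + i * τ + j := by
    rw [div_eq_iff hM]
    push_cast
    linear_combination -hzM
  rw [torsionValue, torsionValue, hpt, ← hz, hφ τ hτ z i j, ← mul_assoc, ← ee_add,
    ← ee_add_intCast (K * l * z) (K * l * j + K * i * j * M - K * i * μ)]
  congr 2
  push_cast
  linear_combination -(K * i : ℂ) * hzM

lemma torsionValue_congr [NeZero M] (hφ : EllipticLaw (M * K) φ) {τ : ℂ} (hτ : 0 < τ.im)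
    {l l' μ μ' : ℤ} (hl : (l : ZMod M) = l') (hμ : (μ : ZMod M) = μ') :
    torsionValue M K φ l μ τ = torsionValue M K φ l' μ' τ := by
  rw [ZMod.intCast_eq_intCast_iff_dvd_sub] at hl hμ
  obtain ⟨i, hi⟩ := hl
  obtain ⟨j, hj⟩ := hμ
  rw [← torsionValue_add_mul hφ hτ l μ i j]
  congr 1 <;> linarith

lemma torsionValue_moebius [NeZero M] {k : ℤ} (hφ : ModularLaw k (M * K) φ) {τ : ℂ} (hτ : 0 < τ.im)
    {a b c d : ℤ} (hdet : a * d - b * c = 1) (hJ : (c : ℂ) * τ + d ≠ 0) (l μ : ℤ) :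
    torsionValue M K φ l μ ((a * τ + b) / (c * τ + d)) =
      (c * τ + d) ^ k * torsionValue M K φ (l * a + μ * c) (l * b + μ * d) τ := by
  have hM : (M : ℂ) ≠ 0 := NeZero.ne _
  have hdetC : (a : ℂ) * d - b * c = 1 := mod_cast hdet
  set z : ℂ := (((l * a + μ * c : ℤ) : ℂ) * τ + (l * b + μ * d : ℤ)) / M with hz
  have hzM : z * M = (l * a + μ * c) * τ + (l * b + μ * d) := by
    rw [hz, div_mul_cancel₀ _ hM]
    push_cast
    rfl
  have hpt : (l * ((a * τ + b) / (c * τ + d)) + μ) / M = z / (c * τ + d) := by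
    rw [div_eq_div_iff hM hJ, hzM, add_mul, mul_assoc, div_mul_cancel₀ _ hJ]
    ring
  have hexp : K * l * (z / (c * τ + d)) + ((M * K : ℕ) : ℂ) * c * z ^ 2 / (c * τ + d) =
      K * (l * a + μ * c : ℤ) * z := by
    rw [← mul_div_assoc, ← add_div, div_eq_iff hJ]
    push_cast
    linear_combination K * c * z * hzM - K * l * z * hdetC
  rw [torsionValue, torsionValue, hpt, ← hz, hφ τ hτ z a b c d hdet, ← hexp, ee_add]
  ring

/-- The constant term at `z = 0` of the Laurent expansion of `φ(τ, z)`, whose polar part is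
`(2πiz)⁻²` for the functions considered here. -/
def laurentConst (φ : ℂ → ℂ → ℂ) (τ : ℂ) : ℂ :=
  limUnder (𝓝[≠] 0) fun z ↦ φ τ z - 1 / (2 * Real.pi * I * z) ^ 2

lemma IsStandardForm.tendsto_laurentConst {m : ℕ} (hφ : IsStandardForm m φ) {τ : ℂ}
    (hτ : 0 < τ.im) :
    Tendsto (fun z ↦ φ τ z - 1 / (2 * Real.pi * I * z) ^ 2) (𝓝[≠] 0)
      (𝓝 (laurentConst φ τ)) := by
  obtain ⟨g, hg, hφg⟩ := hφ.2.2.2 τ hτ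
  refine tendsto_nhds_limUnder ⟨g 0, ?_⟩
  exact (tendsto_nhdsWithin_of_tendsto_nhds hg.continuousAt).congr' (hφg.mono fun _ ↦ Eq.symm)

lemma tendsto_ee_mul_sq_sub_one_div (α : ℂ) :
    Tendsto (fun z ↦ (ee (α * z ^ 2) - 1) / (2 * Real.pi * I * z) ^ 2) (𝓝[≠] 0)
      (𝓝 (α / (2 * Real.pi * I))) := by
  have hderiv : HasDerivAt (fun u ↦ ee (α * u)) (2 * Real.pi * I * α) 0 := by
    unfold ee
    have h := ((hasDerivAt_id (0 : ℂ)).const_mul (2 * Real.pi * I * α)).cexp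
    simpa [mul_assoc] using h
  have hsq : Tendsto (fun z : ℂ ↦ z ^ 2) (𝓝[≠] 0) (𝓝[≠] 0) := by
    refine tendsto_nhdsWithin_iff.2 ⟨tendsto_nhdsWithin_of_tendsto_nhds ?_, ?_⟩
    · simpa using (continuous_pow 2).tendsto (0 : ℂ)
    · filter_upwards [self_mem_nhdsWithin] with z hz using pow_ne_zero 2 hz
  have hlim := (hderiv.tendsto_slope.comp hsq).div_const ((2 * Real.pi * I) ^ 2)
  have hval : 2 * Real.pi * I * α / (2 * Real.pi * I) ^ 2 = α / (2 * Real.pi * I) := by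
    field_simp [Complex.two_pi_I_ne_zero]
  rw [hval] at hlim
  refine hlim.congr fun z ↦ ?_
  simp only [Function.comp_apply, slope_def_field, mul_zero, ee_zero, sub_zero]
  rw [div_div, mul_pow _ z, mul_comm (z ^ 2)]

lemma laurentConst_moebius {m : ℕ} (hφ : ModularLaw 2 m φ) {τ : ℂ} (hτ : 0 < τ.im)
    (hlim : Tendsto (fun z ↦ φ τ z - 1 / (2 * Real.pi * I * z) ^ 2) (𝓝[≠] 0)
      (𝓝 (laurentConst φ τ)))
    {a b c d : ℤ} (hdet : a * d - b * c = 1) (hJ : (c : ℂ) * τ + d ≠ 0) :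
    laurentConst φ ((a * τ + b) / (c * τ + d)) =
      (c * τ + d) ^ 2 * laurentConst φ τ + m * c * (c * τ + d) / (2 * Real.pi * I) := by
  set J : ℂ := c * τ + d with hJdef
  have hee : Tendsto (fun z ↦ ee (m * c / J * z ^ 2)) (𝓝[≠] 0) (𝓝 1) :=
    tendsto_nhdsWithin_of_tendsto_nhds (by
      simpa [ee_zero] using (show Continuous fun z ↦ ee (m * c / J * z ^ 2) by fun_prop).tendsto 0)
  have hlim' := ((hee.mul hlim).add (tendsto_ee_mul_sq_sub_one_div (m * c / J))).const_mul (J ^ 2)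
  have hval : J ^ 2 * (1 * laurentConst φ τ + m * c / J / (2 * Real.pi * I)) =
      J ^ 2 * laurentConst φ τ + m * c * J / (2 * Real.pi * I) := by
    field_simp
  rw [hval] at hlim'
  refine ((hlim'.comp (tendsto_const_mul_nhdsNE_zero hJ)).congr fun w ↦ ?_).limUnder_eq
  have hmod := hφ τ hτ (J * w) a b c d hdet
  rw [← hJdef, mul_div_cancel_left₀ w hJ, zpow_ofNat] at hmod
  rw [hmod, Function.comp_apply]
  field_simp
  ring

/-- The sum of the values of `φ` at all `M`-torsion points, regularised at `z = 0`. -/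
def torsionSum (M K : ℕ) [NeZero M] (φ : ℂ → ℂ → ℂ) (τ : ℂ) : ℂ :=
  laurentConst φ τ + ∑ v ∈ Finset.univ.erase (0 : ZMod M × ZMod M),
    torsionValue M K φ v.1.val v.2.val τ

lemma sum_torsionValue_moebius [NeZero M] {k : ℤ} (hmod : ModularLaw k (M * K) φ)
    (hell : EllipticLaw (M * K) φ) {τ : ℂ} (hτ : 0 < τ.im)
    {a b c d : ℤ} (hdet : a * d - b * c = 1) (hJ : (c : ℂ) * τ + d ≠ 0) :
    ∑ v ∈ Finset.univ.erase (0 : ZMod M × ZMod M),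
        torsionValue M K φ v.1.val v.2.val ((a * τ + b) / (c * τ + d)) =
      (c * τ + d) ^ k * ∑ v ∈ Finset.univ.erase (0 : ZMod M × ZMod M),
        torsionValue M K φ v.1.val v.2.val τ := by
  have hdet' : (a : ZMod M) * d - b * c = 1 := mod_cast congrArg (Int.cast : ℤ → ZMod M) hdet
  let i : ZMod M × ZMod M → ZMod M × ZMod M := fun v ↦ (v.1 * a + v.2 * c, v.1 * b + v.2 * d)
  let j : ZMod M × ZMod M → ZMod M × ZMod M := fun v ↦ (v.1 * d - v.2 * c, v.2 * a - v.1 * b)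
  have hji (v) : j (i v) = v := by
    ext
    · linear_combination v.1 * hdet'
    · linear_combination v.2 * hdet'
  have hij (v) : i (j v) = v := by
    ext
    · linear_combination v.1 * hdet'
    · linear_combination v.2 * hdet'
  have hi0 : i 0 = 0 := by simp [i]
  have hj0 : j 0 = 0 := by simp [j]
  rw [Finset.mul_sum]
  refine Finset.sum_nbij' i j (fun v hv ↦ ?_) (fun v hv ↦ ?_) (fun v _ ↦ hji v) (fun v _ ↦ hij v)
    fun v _ ↦ ?_
  · exact Finset.mem_erase.2 ⟨fun h ↦ Finset.ne_of_mem_erase hv (by rw [← hji v, h, hj0]),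
      Finset.mem_univ _⟩
  · exact Finset.mem_erase.2 ⟨fun h ↦ Finset.ne_of_mem_erase hv (by rw [← hij v, h, hi0]),
      Finset.mem_univ _⟩
  · rw [torsionValue_moebius hmod hτ hdet hJ]
    congr 1
    exact torsionValue_congr hell hτ (by simp [i]) (by simp [i])

lemma IsStandardForm.torsionSum_moebius [NeZero M] (hφ : IsStandardForm (M * K) φ) {τ : ℂ}
    (hτ : 0 < τ.im) {a b c d : ℤ} (hdet : a * d - b * c = 1) (hJ : (c : ℂ) * τ + d ≠ 0) :
    torsionSum M K φ ((a * τ + b) / (c * τ + d)) =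
      (c * τ + d) ^ 2 * torsionSum M K φ τ + M * K * c * (c * τ + d) / (2 * Real.pi * I) := by
  rw [torsionSum, torsionSum, laurentConst_moebius hφ.1 hτ (hφ.tendsto_laurentConst hτ) hdet hJ,
    sum_torsionValue_moebius hφ.1 hφ.2.1 hτ hdet hJ, zpow_ofNat]
  push_cast
  ring

lemma IsStandardForm.torsionSum_add_one [NeZero M] (hφ : IsStandardForm (M * K) φ) {τ : ℂ}
    (hτ : 0 < τ.im) : torsionSum M K φ (τ + 1) = torsionSum M K φ τ := by
  simpa using hφ.torsionSum_moebius hτ (a := 1) (b := 1) (c := 0) (d := 1) (by norm_num) (by simp)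

lemma IsStandardForm.torsionSum_neg_inv [NeZero M] (hφ : IsStandardForm (M * K) φ) {τ : ℂ}
    (hτ : 0 < τ.im) : torsionSum M K φ (-τ⁻¹) =
      τ ^ 2 * torsionSum M K φ τ + M * K / (2 * Real.pi * I) * τ := by
  have hτ0 := ne_zero_of_im_pos hτ
  have := hφ.torsionSum_moebius hτ (a := 0) (b := -1) (c := 1) (d := 0) (by norm_num) (by simpa)
  simpa [div_eq_mul_inv, mul_right_comm] using this

end Torsion

section FinitePart

lemma mul_add_inj_of_im_ne_zero {τ : ℂ} (hτ : τ.im ≠ 0) {a b c d : ℝ} :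
    (a : ℂ) * τ + b = c * τ + d ↔ a = c ∧ b = d := by
  refine ⟨fun h ↦ ?_, fun ⟨hac, hbd⟩ ↦ by rw [hac, hbd]⟩
  have him := congrArg Complex.im h
  have hre := congrArg Complex.re h
  simp only [Complex.add_im, Complex.im_ofReal_mul, Complex.ofReal_im, add_zero, mul_left_inj' hτ,
    Complex.add_re, Complex.re_ofReal_mul, Complex.ofReal_re] at him hre
  subst him
  exact ⟨rfl, add_left_cancel hre⟩

/-- The `(n, r)` term of the Fourier expansion of an elliptic form with coefficients `C(Δ, ℓ)`. -/
def jacobiTerm (m : ℕ) (C : ℤ → ℤ → ℂ) (p : ℤ × ℤ) (τ z : ℂ) : ℂ :=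
  C (4 * m * p.1 - p.2 ^ 2) p.2 * ee (p.1 * τ + p.2 * z)

/-- The finite part `Φ`, defined by its Fourier series and hence also at the poles of `φ` and
`A_{2,m}`. -/
def finitePart (m : ℕ) (C : ℤ → ℤ → ℂ) (τ z : ℂ) : ℂ :=
  ∑' p, jacobiTerm m C p τ z

variable {m : ℕ} {C : ℤ → ℤ → ℂ} {φ : ℂ → ℂ → ℂ} {τ : ℂ}

lemma norm_jacobiTerm_add_ofReal (p : ℤ × ℤ) (τ z : ℂ) (x : ℝ) :
    ‖jacobiTerm m C p τ (z + x)‖ = ‖jacobiTerm m C p τ z‖ := by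
  simp [jacobiTerm, norm_ee]

namespace IsFinitePartCoeffs

lemma finitePart_eq (hC : IsFinitePartCoeffs m φ C) (hτ : 0 < τ.im) {z : ℂ}
    (hz : ∀ lam mu : ℤ, z ≠ lam * τ + mu) : finitePart m C τ z = φ τ z - A2sum m τ z :=
  (hC.2.2 τ hτ z hz).tsum_eq

lemma summable_jacobiTerm (hC : IsFinitePartCoeffs m φ C) (hτ : 0 < τ.im) (z : ℂ) :
    Summable fun p ↦ jacobiTerm m C p τ z := by
  by_cases hz : ∀ lam mu : ℤ, z ≠ lam * τ + mu
  · exact (hC.2.2 τ hτ z hz).summable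
  push Not at hz
  obtain ⟨lam, mu, rfl⟩ := hz
  -- The absolute values of the terms only depend on `im z`, so we may move off the lattice.
  have hshift := (hC.2.2 τ hτ (lam * τ + mu + (1 / 2 : ℝ)) fun lam' mu' h ↦ ?_).summable
  · refine (hshift.norm.congr fun p ↦ ?_).of_norm
    exact norm_jacobiTerm_add_ofReal p τ _ _
  · have hcoeff : ((lam : ℝ) : ℂ) * τ + ((mu + 1 / 2 : ℝ) : ℂ) = (lam' : ℝ) * τ + (mu' : ℝ) := by
      push_cast at h ⊢
      rw [← h]
      ring
    have hhalf := ((mul_add_inj_of_im_ne_zero hτ.ne').1 hcoeff).2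
    have hint : 2 * mu + 1 = 2 * mu' := by
      have : (2 * mu + 1 : ℝ) = 2 * mu' := by linarith
      exact_mod_cast this
    omega

lemma continuous_finitePart_ofReal (hC : IsFinitePartCoeffs m φ C) (hτ : 0 < τ.im) :
    Continuous fun x : ℝ ↦ finitePart m C τ x := by
  refine continuous_tsum (fun p ↦ ?_) (hC.summable_jacobiTerm hτ 0).norm fun p x ↦ ?_
  · unfold jacobiTerm
    fun_prop
  · simpa using (norm_jacobiTerm_add_ofReal (m := m) (C := C) p τ 0 x).le

end IsFinitePartCoeffs

lemma exp_neg_two_pi_mul_lt_one {δ : ℝ} (hδ : 0 < δ) : Real.exp (-(2 * Real.pi * δ)) < 1 := by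
  rw [Real.exp_lt_one_iff, neg_lt_zero]
  positivity

lemma norm_ee_mul_lerchKernel_le {w v : ℂ} (hw : 0 ≤ w.im) {n : ℕ} (hn : n ≠ 0) {δ : ℝ}
    (hδ : 0 < δ) (hv : n * δ ≤ |v.im|) :
    ‖ee w * lerchKernel v‖ ≤
      Real.exp (-(2 * Real.pi * δ)) ^ n / (1 - Real.exp (-(2 * Real.pi * δ))) ^ 2 := by
  wlog hv₀ : 0 ≤ v.im generalizing v
  · rw [← lerchKernel_neg]
    exact this (by simpa using hv) (by simpa using (not_le.1 hv₀).le)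
  set r := Real.exp (-(2 * Real.pi * δ)) with hr
  have hr₀ : 0 ≤ r := (Real.exp_pos _).le
  have hr₁ : r < 1 := exp_neg_two_pi_mul_lt_one hδ
  have hrn : r ^ n ≤ r := pow_le_of_le_one hr₀ hr₁.le hn
  have hwnorm : ‖ee w‖ ≤ 1 := by
    rw [norm_ee, Real.exp_le_one_iff, neg_nonpos]
    positivity
  have hvnorm : ‖ee v‖ ≤ r ^ n := by
    rw [norm_ee, hr, ← Real.exp_nat_mul, Real.exp_le_exp]
    rw [abs_of_nonneg hv₀] at hv
    nlinarith [Real.pi_pos]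
  calc ‖ee w * lerchKernel v‖ ≤ ‖lerchKernel v‖ := by
        rw [norm_mul]
        exact mul_le_of_le_one_left (norm_nonneg _) hwnorm
    _ ≤ r ^ n / (1 - r ^ n) ^ 2 := norm_lerchKernel_le (hrn.trans_lt hr₁) hvnorm
    _ ≤ r ^ n / (1 - r) ^ 2 := by
        have : 0 < 1 - r := sub_pos.2 hr₁
        gcongr

lemma summable_pow_natAbs {r : ℝ} (hr₀ : 0 ≤ r) (hr : r < 1) :
    Summable fun n : ℤ ↦ r ^ n.natAbs := by
  have := summable_geometric_of_lt_one hr₀ hr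
  exact Summable.of_nat_of_neg (by simpa using this) (by simpa using this)

lemma A2sum_eq_tsum (m : ℕ) (τ z : ℂ) :
    A2sum m τ z = ∑' s : ℤ, ee (m * s ^ 2 * τ + 2 * m * s * z) * lerchKernel (s * τ + z) := by
  refine tsum_congr fun s ↦ ?_
  rw [lerchKernel, ← mul_div_assoc, ← ee_add]
  ring_nf

lemma tendsto_ofReal_nhdsNE_zero : Tendsto ((↑) : ℝ → ℂ) (𝓝[≠] 0) (𝓝[≠] 0) := by
  refine tendsto_nhdsWithin_iff.2 ⟨tendsto_nhdsWithin_of_tendsto_nhds ?_, ?_⟩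
  · simpa using Complex.continuous_ofReal.tendsto 0
  · filter_upwards [self_mem_nhdsWithin] with x hx using Complex.ofReal_ne_zero.2 hx

lemma norm_A2sum_term_le (m : ℕ) (hτ : 0 < τ.im) {s : ℤ} (hs : s ≠ 0) (x : ℝ) :
    ‖ee (m * s ^ 2 * τ + 2 * m * s * x) * lerchKernel (s * τ + x)‖ ≤
      Real.exp (-(2 * Real.pi * τ.im)) ^ s.natAbs /
        (1 - Real.exp (-(2 * Real.pi * τ.im))) ^ 2 := by
  refine norm_ee_mul_lerchKernel_le ?_ (Int.natAbs_ne_zero.2 hs) hτ (le_of_eq ?_)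
  · have him : (m * s ^ 2 * τ + 2 * m * s * x).im = m * s ^ 2 * τ.im := by
      have h : (m * s ^ 2 * τ + 2 * m * s * x : ℂ) =
          (m * s ^ 2 : ℝ) * τ + (2 * m * s * x : ℝ) := by push_cast; ring
      rw [h, Complex.add_im, Complex.im_ofReal_mul, Complex.ofReal_im, add_zero]
    rw [him]
    positivity
  · simp [abs_mul, abs_of_pos hτ]

lemma continuous_tsum_ite_A2sum (m : ℕ) (hτ : 0 < τ.im) :
    Continuous fun x : ℝ ↦ ∑' s : ℤ, if s = 0 then (0 : ℂ) else
      ee (m * s ^ 2 * τ + 2 * m * s * x) * lerchKernel (s * τ + x) := by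
  set r := Real.exp (-(2 * Real.pi * τ.im))
  have hr₁ : r < 1 := exp_neg_two_pi_mul_lt_one hτ
  refine continuous_tsum (u := fun s : ℤ ↦ r ^ s.natAbs / (1 - r) ^ 2) (fun s ↦ ?_)
    ((summable_pow_natAbs (Real.exp_pos _).le hr₁).div_const _) fun s x ↦ ?_
  · split_ifs with hs
    · exact continuous_const
    · refine (by fun_prop : Continuous _).mul (continuous_iff_continuousAt.2 fun x ↦ ?_)
      refine (continuousAt_lerchKernel fun n h ↦ ?_).comp (by fun_prop)
      have him := congrArg Complex.im h
      simp [hs, hτ.ne'] at him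
  · split_ifs with hs
    · rw [norm_zero]
      positivity
    · exact norm_A2sum_term_le m hτ hs x

lemma A2sum_ofReal_eq (m : ℕ) (hτ : 0 < τ.im) (x : ℝ) :
    A2sum m τ x = lerchKernel x + ∑' s : ℤ, if s = 0 then (0 : ℂ) else
      ee (m * s ^ 2 * τ + 2 * m * s * x) * lerchKernel (s * τ + x) := by
  set r := Real.exp (-(2 * Real.pi * τ.im))
  have hr₁ : r < 1 := exp_neg_two_pi_mul_lt_one hτ
  have hsum : Summable fun s : ℤ ↦
      ee (m * s ^ 2 * τ + 2 * m * s * x) * lerchKernel (s * τ + x) := by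
    refine Summable.of_norm_bounded_eventually (g := fun s : ℤ ↦ r ^ s.natAbs / (1 - r) ^ 2)
      ((summable_pow_natAbs (Real.exp_pos _).le hr₁).div_const _) ?_
    filter_upwards [(Set.finite_singleton (0 : ℤ)).compl_mem_cofinite] with s hs
    exact norm_A2sum_term_le m hτ hs x
  rw [A2sum_eq_tsum, hsum.tsum_eq_add_tsum_ite 0]
  simp [ee_zero]

lemma tendsto_A2sum_sub (m : ℕ) (hτ : 0 < τ.im) :
    Tendsto (fun x : ℝ ↦ A2sum m τ x - 1 / (2 * Real.pi * I * x) ^ 2) (𝓝[≠] 0)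
      (𝓝 (A2sum m τ 0 - 1 / 12)) := by
  have hA := A2sum_ofReal_eq m hτ
  have hrest := (continuous_tsum_ite_A2sum m hτ).tendsto 0
  have h0 : lerchKernel ((0 : ℝ) : ℂ) = 0 := by simpa using lerchKernel_intCast 0
  have hzero := hA 0
  rw [h0, zero_add, Complex.ofReal_zero] at hzero
  have hlim := (tendsto_lerchKernel_sub.comp tendsto_ofReal_nhdsNE_zero).add
    (tendsto_nhdsWithin_of_tendsto_nhds hrest)
  rw [Complex.ofReal_zero, ← hzero, neg_div, neg_add_eq_sub] at hlim
  refine hlim.congr fun x ↦ ?_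
  rw [hA x, Function.comp_apply]
  ring

lemma IsFinitePartCoeffs.laurentConst_eq (hC : IsFinitePartCoeffs m φ C)
    (hφ : IsStandardForm m φ) (hτ : 0 < τ.im) :
    laurentConst φ τ = finitePart m C τ 0 + A2sum m τ 0 - 1 / 12 := by
  have hlim : Tendsto (fun x : ℝ ↦ finitePart m C τ x +
      (A2sum m τ x - 1 / (2 * Real.pi * I * x) ^ 2)) (𝓝[≠] 0)
      (𝓝 (finitePart m C τ 0 + (A2sum m τ 0 - 1 / 12))) := by
    refine Tendsto.add (tendsto_nhdsWithin_of_tendsto_nhds ?_) (tendsto_A2sum_sub m hτ)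
    simpa using (hC.continuous_finitePart_ofReal hτ).tendsto 0
  rw [add_sub_assoc]
  refine tendsto_nhds_unique
    ((hφ.tendsto_laurentConst hτ).comp tendsto_ofReal_nhdsNE_zero) (hlim.congr' ?_)
  filter_upwards [self_mem_nhdsWithin,
    mem_nhdsWithin_of_mem_nhds (Ioo_mem_nhds neg_one_lt_zero one_pos)] with x hx hx1
  rw [hC.finitePart_eq hτ fun lam mu h ↦ ?_, Function.comp_apply]
  · ring
  · have hcoeff : ((0 : ℝ) : ℂ) * τ + (x : ℂ) = (lam : ℝ) * τ + (mu : ℝ) := by simpa using h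
    have hxmu := ((mul_add_inj_of_im_ne_zero hτ.ne').1 hcoeff).2
    rw [hxmu] at hx hx1
    have h1 : (-1 : ℤ) < mu := by exact_mod_cast hx1.1
    have h2 : mu < 1 := by exact_mod_cast hx1.2
    exact hx (by simp [show mu = 0 by omega])

lemma val_mul_add_val_div_ne {M : ℕ} [NeZero M] (hτ : τ.im ≠ 0) {v : ZMod M × ZMod M} (hv : v ≠ 0)
    (lam mu : ℤ) : (((v.1.val : ℤ) : ℂ) * τ + ((v.2.val : ℤ) : ℂ)) / M ≠ lam * τ + mu := by
  intro h
  have hcoeff : ((v.1.val / M : ℝ) : ℂ) * τ + ((v.2.val / M : ℝ) : ℂ) =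
      (lam : ℝ) * τ + (mu : ℝ) := by
    push_cast at h ⊢
    rw [← h]
    ring
  have hcast {u : ZMod M} {n : ℤ} (hu : (u.val / M : ℝ) = n) : (u.val : ℂ) / M = n := by
    rw [← Complex.ofReal_intCast, ← hu, Complex.ofReal_div, Complex.ofReal_natCast,
      Complex.ofReal_natCast]
  obtain ⟨h1, h2⟩ := (mul_add_inj_of_im_ne_zero hτ).1 hcoeff
  refine hv (Prod.ext ?_ ?_) <;> by_contra hne
  · exact val_div_ne_intCast hne lam (hcast h1)
  · exact val_div_ne_intCast hne mu (hcast h2)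

lemma IsFinitePartCoeffs.torsionSum_eq {M K : ℕ} [NeZero M] (hC : IsFinitePartCoeffs (M * K) φ C)
    (hφ : IsStandardForm (M * K) φ) (hτ : 0 < τ.im) :
    torsionSum M K φ τ = ∑ v : ZMod M × ZMod M,
      (torsionValue M K (finitePart (M * K) C) v.1.val v.2.val τ +
        torsionValue M K (A2sum (M * K)) v.1.val v.2.val τ) - 1 / 12 := by
  have hzero (F : ℂ → ℂ → ℂ) : torsionValue M K F ((0 : ZMod M × ZMod M).1.val)
      ((0 : ZMod M × ZMod M).2.val) τ = F τ 0 := by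
    simp [torsionValue, ee_zero]
  have hoff {v : ZMod M × ZMod M} (hv : v ∈ Finset.univ.erase 0) :
      torsionValue M K φ v.1.val v.2.val τ =
        torsionValue M K (finitePart (M * K) C) v.1.val v.2.val τ +
          torsionValue M K (A2sum (M * K)) v.1.val v.2.val τ := by
    rw [torsionValue, torsionValue, torsionValue,
      hC.finitePart_eq hτ (val_mul_add_val_div_ne hτ.ne' (Finset.ne_of_mem_erase hv))]
    ring
  rw [torsionSum, Finset.sum_congr rfl fun v hv ↦ hoff hv, hC.laurentConst_eq hφ hτ,
    ← Finset.add_sum_erase Finset.univ _ (Finset.mem_univ (0 : ZMod M × ZMod M)), hzero, hzero]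
  ring

end FinitePart

section AppellLerch

variable {M K : ℕ}

lemma im_mul_add_div (N μ : ℤ) (τ : ℂ) : ((N * τ + μ) / M : ℂ).im = N * τ.im / M := by
  simp [Complex.div_natCast_im]

lemma torsionValue_lerchKernel_neg (N μ : ℤ) (τ : ℂ) :
    torsionValue M K (fun _ ↦ lerchKernel) (-N) (-μ) τ =
      torsionValue M K (fun _ ↦ lerchKernel) N μ τ := by
  have hpt : (((-N : ℤ) : ℂ) * τ + (-μ : ℤ)) / M = -((N * τ + μ) / M) := by
    push_cast
    ring
  rw [torsionValue, torsionValue, hpt, lerchKernel_neg]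
  push_cast
  ring_nf

variable [NeZero M]

lemma torsionValue_A2sum (l μ : ℤ) (τ : ℂ) :
    torsionValue M K (A2sum (M * K)) l μ τ =
      ∑' s : ℤ, torsionValue M K (fun _ ↦ lerchKernel) (l + s * M) μ τ := by
  have hM : (M : ℂ) ≠ 0 := NeZero.ne _
  rw [torsionValue, A2sum_eq_tsum, ← tsum_mul_left]
  refine tsum_congr fun s ↦ ?_
  have hpt : (((l + s * M : ℤ) : ℂ) * τ + μ) / M = s * τ + (l * τ + μ) / M := by
    push_cast
    field_simp
    ring
  have hphase : K * l * ((l * τ + μ) / M) +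
        ((M * K : ℕ) * s ^ 2 * τ + 2 * (M * K : ℕ) * s * ((l * τ + μ) / M)) =
      K * (l + s * M : ℤ) * (s * τ + (l * τ + μ) / M) + (K * s * μ : ℤ) := by
    push_cast
    field_simp
    ring
  rw [torsionValue, hpt, ← mul_assoc, ← ee_add, hphase, ee_add_intCast]

lemma hasSum_torsionValue_lerchKernel {N : ℤ} (hN : 0 < N) (μ : ℤ) {τ : ℂ} (hτ : 0 < τ.im) :
    HasSum (fun k : ℕ ↦ k * ee ((K * N + k) * μ / M) * ee ((K * N ^ 2 + k * N : ℤ) * τ / M))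
      (torsionValue M K (fun _ ↦ lerchKernel) N μ τ) := by
  have hM : (M : ℂ) ≠ 0 := NeZero.ne _
  have him : 0 < ((N * τ + μ) / M : ℂ).im := by
    rw [im_mul_add_div]
    have : (0 : ℝ) < M := Nat.cast_pos.2 (NeZero.pos M)
    positivity
  refine ((hasSum_lerchKernel him).mul_left _).congr_fun fun k ↦ ?_
  rw [mul_left_comm, ← ee_add, mul_assoc, ← ee_add]
  push_cast
  congr 2
  field_simp
  ring

lemma hasConstantTerm_torsionValue_lerchKernel_of_pos {N : ℤ} (hN : 0 < N) (μ : ℤ) :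
    HasConstantTerm M (torsionValue M K (fun _ ↦ lerchKernel) N μ) 0 := by
  have hsum {τ : ℂ} (hτ : 0 < τ.im) := hasSum_torsionValue_lerchKernel (M := M) (K := K) hN μ hτ
  have hterm (k : ℕ) : (if (K * N ^ 2 + k * N : ℤ) = 0 then
      (k * ee ((K * N + k) * μ / M) : ℂ) else 0) = 0 := by
    rcases Nat.eq_zero_or_pos k with rfl | hk
    · simp
    · exact if_neg (by positivity)
  have := HasConstantTerm.tsum (fun k : ℕ ↦ hasConstantTerm_mul_ee (w := M)
    (a := fun k : ℕ ↦ (k * ee ((K * N + k) * μ / M) : ℂ)) (n := fun k ↦ K * N ^ 2 + k * N) k)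
    (stripSummable_mul_ee fun τ hτ ↦ (hsum hτ).summable)
  rw [tsum_congr hterm, tsum_zero] at this
  exact this.congr fun τ hτ ↦ (hsum hτ).tsum_eq.symm

lemma hasConstantTerm_torsionValue_lerchKernel (N μ : ℤ) :
    HasConstantTerm M (torsionValue M K (fun _ ↦ lerchKernel) N μ)
      (if N = 0 then lerchKernel (μ / M) else 0) := by
  rcases lt_trichotomy N 0 with hN | rfl | hN
  · rw [if_neg hN.ne]
    exact (hasConstantTerm_torsionValue_lerchKernel_of_pos (neg_pos.2 hN) (-μ)).congr
      fun τ _ ↦ (torsionValue_lerchKernel_neg N μ τ).symm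
  · rw [if_pos rfl]
    exact (HasConstantTerm.const M _).congr fun τ _ ↦ by simp [torsionValue, ee_zero]
  · rw [if_neg hN.ne']
    exact hasConstantTerm_torsionValue_lerchKernel_of_pos hN μ

lemma norm_torsionValue_lerchKernel_le {N : ℤ} (hN : N ≠ 0) (μ : ℤ) {y : ℝ} (hy : 0 < y) {τ : ℂ}
    (hτ : y ≤ τ.im) :
    ‖torsionValue M K (fun _ ↦ lerchKernel) N μ τ‖ ≤
      Real.exp (-(2 * Real.pi * (y / M))) ^ N.natAbs /
        (1 - Real.exp (-(2 * Real.pi * (y / M)))) ^ 2 := by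
  have hM : (0 : ℝ) < M := Nat.cast_pos.2 (NeZero.pos M)
  have hτ₀ := hy.trans_le hτ
  refine norm_ee_mul_lerchKernel_le ?_ (Int.natAbs_ne_zero.2 hN) (by positivity) ?_
  · have him : (K * N * ((N * τ + μ) / M) : ℂ).im = K * N ^ 2 * τ.im / M := by
      rw [show (K * N * ((N * τ + μ) / M) : ℂ) = (K * N : ℝ) * ((N * τ + μ) / M) by push_cast; rfl,
        Complex.im_ofReal_mul, im_mul_add_div]
      ring
    rw [him]
    positivity
  · rw [im_mul_add_div, abs_div, abs_mul, Nat.abs_cast, Nat.cast_natAbs, Int.cast_abs,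
      mul_div_assoc]
    gcongr
    exact hτ.trans (le_abs_self _)

lemma stripSummable_torsionValue_lerchKernel (μ : ℤ) :
    StripSummable fun N ↦ torsionValue M K (fun _ ↦ lerchKernel) N μ := by
  intro y₁ y₂ hy₁
  have hM : (0 : ℝ) < M := Nat.cast_pos.2 (NeZero.pos M)
  set r := Real.exp (-(2 * Real.pi * (y₁ / M)))
  have hr₁ : r < 1 := exp_neg_two_pi_mul_lt_one (by positivity)
  refine ⟨fun N ↦ r ^ N.natAbs / (1 - r) ^ 2 + if N = 0 then ‖lerchKernel (μ / M)‖ else 0,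
    ((summable_pow_natAbs (Real.exp_pos _).le hr₁).div_const _).add
      (hasSum_ite_eq 0 _).summable, fun N τ hτ _ ↦ ?_⟩
  beta_reduce
  split_ifs with hN
  · have hpos : 0 ≤ r ^ N.natAbs / (1 - r) ^ 2 := by positivity
    have hval : torsionValue M K (fun _ ↦ lerchKernel) N μ τ = lerchKernel (μ / M) := by
      simp [torsionValue, hN, ee_zero]
    rw [hval]
    exact le_add_of_nonneg_left hpos
  · rw [add_zero]
    exact norm_torsionValue_lerchKernel_le hN μ hy₁ hτ.le

lemma hasConstantTerm_torsionValue_A2sum (l : ZMod M) (μ : ℤ) :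
    HasConstantTerm M (torsionValue M K (A2sum (M * K)) l.val μ)
      (if l = 0 then lerchKernel (μ / M) else 0) := by
  have hinj : Function.Injective fun s : ℤ ↦ l.val + s * M := fun s s' h ↦ by
    simpa [NeZero.ne M] using h
  have := HasConstantTerm.tsum
    (fun s : ℤ ↦ hasConstantTerm_torsionValue_lerchKernel (M := M) (K := K) (l.val + s * M) μ)
    ((stripSummable_torsionValue_lerchKernel μ).comp_injective hinj)
  rw [tsum_eq_single 0 fun s hs ↦ if_neg ?_] at this
  · simpa only [zero_mul, add_zero, Nat.cast_eq_zero, ZMod.val_eq_zero] using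
      this.congr fun τ _ ↦ torsionValue_A2sum l.val μ τ
  · intro h
    have hl : (l.val : ZMod M) = 0 := by
      simpa using congrArg ((↑) : ℤ → ZMod M) h
    rw [ZMod.natCast_zmod_val] at hl
    simp [hl, NeZero.ne M, hs] at h

lemma hasConstantTerm_sum_torsionValue_A2sum :
    HasConstantTerm M (fun τ ↦ ∑ v : ZMod M × ZMod M,
      torsionValue M K (A2sum (M * K)) v.1.val v.2.val τ) ((1 - M ^ 2) / 12) := by
  have hconst : ∑ v : ZMod M × ZMod M,
      (if v.1 = 0 then lerchKernel ((v.2.val : ℤ) / M) else 0) = (1 - (M : ℂ) ^ 2) / 12 := by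
    rw [Fintype.sum_prod_type_right, ← sum_lerchKernel_div]
    simp only [Finset.sum_ite_eq', Finset.mem_univ, if_true, Int.cast_natCast]
  rw [← hconst]
  exact HasConstantTerm.sum _ fun v ↦ hasConstantTerm_torsionValue_A2sum v.1 v.2.val

end AppellLerch

section FinitePartConstantTerm

variable {M K : ℕ} {C : ℤ → ℤ → ℂ} {φ : ℂ → ℂ → ℂ}

lemma IsFinitePartCoeffs.hasSum_torsionValue (hC : IsFinitePartCoeffs (M * K) φ C) (l μ : ℤ) {τ : ℂ}
    (hτ : 0 < τ.im) :
    HasSum (fun p ↦ torsionValue M K (jacobiTerm (M * K) C p) l μ τ)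
      (torsionValue M K (finitePart (M * K) C) l μ τ) :=
  (hC.summable_jacobiTerm hτ _).hasSum.mul_left _

variable [NeZero M]

/-- The coefficient of `q^{(Mn + l(r + Kl))/M}` which the `(n, r)` term of `Φ` contributes to
`∑_μ torsionValue M K Φ l μ`. -/
def torsionCoeff (M K : ℕ) (C : ℤ → ℤ → ℂ) (l : ℤ) (p : ℤ × ℤ) : ℂ :=
  C (4 * (M * K) * p.1 - p.2 ^ 2) p.2 * if (M : ℤ) ∣ p.2 + K * l then (M : ℂ) else 0

lemma torsionValue_jacobiTerm (l μ : ℤ) (p : ℤ × ℤ) (τ : ℂ) :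
    torsionValue M K (jacobiTerm (M * K) C p) l μ τ =
      C (4 * (M * K) * p.1 - p.2 ^ 2) p.2 * ee ((p.2 + K * l : ℤ) * μ / M) *
        ee ((M * p.1 + l * (p.2 + K * l) : ℤ) * τ / M) := by
  have hM : (M : ℂ) ≠ 0 := NeZero.ne _
  rw [torsionValue, jacobiTerm, mul_left_comm, ← ee_add, mul_assoc (C _ _), ← ee_add]
  push_cast
  congr 2
  field_simp
  ring

lemma IsFinitePartCoeffs.hasSum_sum_torsionValue (hC : IsFinitePartCoeffs (M * K) φ C) (l : ℤ)
    {τ : ℂ} (hτ : 0 < τ.im) :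
    HasSum (fun p : ℤ × ℤ ↦
        torsionCoeff M K C l p * ee ((M * p.1 + l * (p.2 + K * l) : ℤ) * τ / M))
      (∑ μ : ZMod M, torsionValue M K (finitePart (M * K) C) l μ.val τ) := by
  refine (hasSum_sum fun (μ : ZMod M) _ ↦ hC.hasSum_torsionValue l μ.val hτ).congr_fun fun p ↦ ?_
  simp only [torsionValue_jacobiTerm, ← Finset.sum_mul, ← Finset.mul_sum, Int.cast_natCast]
  rw [sum_ee_mul_val_div, torsionCoeff]

lemma IsFinitePartCoeffs.stripSummable_torsionCoeff (hC : IsFinitePartCoeffs (M * K) φ C) (l : ℤ) :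
    StripSummable fun (p : ℤ × ℤ) τ ↦
      torsionCoeff M K C l p * ee ((M * p.1 + l * (p.2 + K * l) : ℤ) * τ / M) :=
  stripSummable_mul_ee (n := fun p : ℤ × ℤ ↦ M * p.1 + l * (p.2 + K * l))
    fun _ hτ ↦ (hC.hasSum_sum_torsionValue l hτ).summable

/-- The coefficients of `Φ` surviving in the constant term of `∑_μ torsionValue M K Φ l μ`. -/
def cuspCoeff (M K : ℕ) (C : ℤ → ℤ → ℂ) (l s : ℤ) : ℂ :=
  C (-(M * s + K * l) ^ 2) (M * s - K * l)

lemma hasSum_cuspCoeff_iff (l : ℤ) {c : ℂ} :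
    HasSum (fun p : ℤ × ℤ ↦
      if M * p.1 + l * (p.2 + K * l) = 0 then torsionCoeff M K C l p else 0) c ↔
    HasSum (fun s ↦ M * cuspCoeff M K C l s) c := by
  have hM : (M : ℤ) ≠ 0 := NeZero.ne _
  have hinj : Function.Injective fun s : ℤ ↦ ((-(l * s), M * s - K * l) : ℤ × ℤ) := fun s s' h ↦
    mul_left_cancel₀ hM (sub_left_injective (congrArg Prod.snd h))
  rw [← hinj.hasSum_iff]
  · refine iff_of_eq (congrArg (HasSum · c) (funext fun s ↦ ?_))
    rw [Function.comp_apply, if_pos (by ring), torsionCoeff, if_pos (by simp), cuspCoeff, mul_comm]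
    congr 2
    ring
  · intro p hp
    split_ifs with hn
    · rw [torsionCoeff, if_neg, mul_zero]
      rintro ⟨s, hs⟩
      refine hp ⟨s, Prod.ext (mul_left_cancel₀ hM ?_) ?_⟩
      · rw [hs] at hn
        linear_combination -hn
      · linear_combination -hs
    · rfl

lemma IsFinitePartCoeffs.summable_cuspCoeff (hC : IsFinitePartCoeffs (M * K) φ C) (l : ℤ) :
    Summable (cuspCoeff M K C l) := by
  have hM : (M : ℂ) ≠ 0 := NeZero.ne _
  have := HasConstantTerm.summable_of_stripSummable hasConstantTerm_mul_ee
    (hC.stripSummable_torsionCoeff l)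
  exact (summable_mul_left_iff hM).1 ((hasSum_cuspCoeff_iff l).1 this.hasSum).summable

lemma IsFinitePartCoeffs.hasConstantTerm_sum_torsionValue (hC : IsFinitePartCoeffs (M * K) φ C) :
    HasConstantTerm M (fun τ ↦ ∑ v : ZMod M × ZMod M,
      torsionValue M K (finitePart (M * K) C) v.1.val v.2.val τ)
      (M * ∑ l : ZMod M, ∑' s, cuspCoeff M K C l.val s) := by
  rw [Finset.mul_sum]
  refine (HasConstantTerm.sum Finset.univ fun l : ZMod M ↦ ?_).congr
    fun τ _ ↦ Fintype.sum_prod_type _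
  have hsum := (hC.summable_cuspCoeff l.val).hasSum.mul_left (M : ℂ)
  have := HasConstantTerm.tsum hasConstantTerm_mul_ee (hC.stripSummable_torsionCoeff l.val)
  rw [((hasSum_cuspCoeff_iff _).2 hsum).tsum_eq] at this
  exact this.congr fun τ hτ ↦ (hC.hasSum_sum_torsionValue l.val hτ).tsum_eq.symm

end FinitePartConstantTerm

section Reindexing

lemma sum_zmod_val {α : Type*} [AddCommMonoid α] (t : ℕ) [NeZero t] (f : ℕ → α) :
    ∑ j : ZMod t, f j.val = ∑ j ∈ Finset.range t, f j :=
  Finset.sum_bij' (fun j _ ↦ j.val) (fun n _ ↦ n)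
    (fun j _ ↦ Finset.mem_range.2 j.val_lt) (fun _ _ ↦ Finset.mem_univ _)
    (fun j _ ↦ ZMod.natCast_zmod_val j)
    (fun _ hj ↦ ZMod.val_cast_of_lt (Finset.mem_range.1 hj)) fun _ _ ↦ rfl

variable {M K t a b : ℕ} {C : ℤ → ℤ → ℂ} {φ : ℂ → ℂ → ℂ}

lemma bijective_bezoutCoords [NeZero M] [NeZero t] (hM : M = t * a) {x y : ℤ}
    (h : a * x + b * y = 1) :
    Function.Bijective fun p : ZMod M × ℤ ↦
      ((a * p.2 + b * p.1.val : ℤ), ((y * p.2 - x * p.1.val : ℤ) : ZMod t)) := by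
  have hMz : (M : ℤ) = t * a := mod_cast hM
  have ha : (a : ℤ) ≠ 0 := right_ne_zero_of_mul (hMz ▸ NeZero.ne (M : ℤ))
  constructor
  · rintro ⟨l, s⟩ ⟨l', s'⟩ heq
    obtain ⟨h1, h2⟩ := Prod.ext_iff.1 heq
    dsimp only at h1 h2
    obtain ⟨k, hk⟩ := (ZMod.intCast_eq_intCast_iff_dvd_sub _ _ _).1 h2
    have hl : l = l' := by
      rw [← ZMod.natCast_zmod_val l, ← ZMod.natCast_zmod_val l', ← Int.cast_natCast,
        ← Int.cast_natCast l'.val, ZMod.intCast_eq_intCast_iff_dvd_sub]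
      exact ⟨-k, by linear_combination (-(l'.val - l.val : ℤ)) * h - y * h1 - a * hk + k * hMz⟩
    subst hl
    rw [mul_left_cancel₀ ha (add_right_cancel h1)]
  · rintro ⟨ρ, j⟩
    let l : ZMod M := ((y * ρ - a * j.val : ℤ) : ZMod M)
    obtain ⟨k, hk⟩ : (M : ℤ) ∣ (y * ρ - a * j.val) - l.val := by
      rw [← ZMod.intCast_eq_intCast_iff_dvd_sub, Int.cast_natCast, ZMod.natCast_zmod_val]
    refine ⟨(l, x * ρ + b * j.val + t * b * k), Prod.ext ?_ ?_⟩
    · linear_combination ρ * h - b * hk - b * k * hMz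
    · have hcoord : y * (x * ρ + b * j.val + t * b * k) - x * l.val = j.val + t * k := by
        linear_combination (j.val + t * k : ℤ) * h + x * hk + x * k * hMz
      dsimp only
      rw [hcoord]
      push_cast
      rw [ZMod.natCast_zmod_val, ZMod.natCast_self, zero_mul, add_zero]

lemma IsFinitePartCoeffs.apply_add_mul {m : ℕ}
    (hC : IsFinitePartCoeffs m φ C) (Δ l k : ℤ) : C Δ (l + k * (2 * m)) = C Δ l :=
  (show Function.Periodic (C Δ) (2 * m : ℤ) from hC.1 Δ).int_mul k l

lemma CoeffU_eq_sum [NeZero t] (hM : M = t * a) (hK : K = t * b) (Δ l : ℤ) :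
    CoeffU (M * K) t C Δ l =
      ∑ j : ZMod t, C (Δ * t ^ 2) ((l + 2 * a * b * j.val) * t) := by
  have hindex : 2 * ((M * K : ℕ) : ℤ) / (t : ℤ) ^ 2 = 2 * a * b := by
    rw [Int.ediv_eq_iff_eq_mul_left (pow_ne_zero 2 (NeZero.ne _))
      ⟨2 * a * b, by rw [hM, hK]; push_cast; ring⟩, hM, hK]
    push_cast
    ring
  rw [CoeffU, sum_zmod_val t fun j : ℕ ↦ C (Δ * t ^ 2) ((l + 2 * a * b * j) * t), hindex]

lemma gcdA_add_gcdB_eq_one (h : a.Coprime b) :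
    (a : ℤ) * a.gcdA b + b * a.gcdB b = 1 := by
  rw [← Nat.gcd_eq_gcd_ab, h, Nat.cast_one]

lemma IsFinitePartCoeffs.cuspCoeff_eq [NeZero t]
    (hC : IsFinitePartCoeffs (M * K) φ C) (hM : M = t * a) (hK : K = t * b) (hab : a.Coprime b)
    {l s ρ : ℤ} {j : ZMod t} (hρ : a * s + b * l = ρ)
    (hj : ((a.gcdB b * s - a.gcdA b * l : ℤ) : ZMod t) = j) :
    cuspCoeff M K C l s = C (-ρ ^ 2 * t ^ 2) ((lstar a b ρ + 2 * a * b * j.val) * t) := by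
  obtain ⟨k, hk⟩ : (t : ℤ) ∣ (a.gcdB b * s - a.gcdA b * l) - j.val := by
    rw [← ZMod.intCast_eq_intCast_iff_dvd_sub, hj, Int.cast_natCast, ZMod.natCast_zmod_val]
  have hbez := gcdA_add_gcdB_eq_one hab
  rw [cuspCoeff, ← hC.apply_add_mul _ ((lstar a b ρ + 2 * a * b * j.val) * t) k, lstar, ← hρ]
  subst hM hK
  congr 1 <;> push_cast
  · ring
  · linear_combination -t * (a * s - b * l) * hbez + 2 * a * b * t * hk

lemma IsFinitePartCoeffs.sum_tsum_cuspCoeff [NeZero M] [NeZero t]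
    (hC : IsFinitePartCoeffs (M * K) φ C) (hM : M = t * a) (hK : K = t * b) (hab : a.Coprime b) :
    ∑ l : ZMod M, ∑' s, cuspCoeff M K C l.val s =
      ∑' ρ, CoeffU (M * K) t C (-ρ ^ 2) (lstar a b ρ) := by
  let H : ℤ × ZMod t → ℂ := fun q ↦
    C (-q.1 ^ 2 * t ^ 2) ((lstar a b q.1 + 2 * a * b * q.2.val) * t)
  let e := Equiv.ofBijective _ (bijective_bezoutCoords hM (gcdA_add_gcdB_eq_one hab))
  have he (p : ZMod M × ℤ) : cuspCoeff M K C p.1.val p.2 = H (e p) :=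
    hC.cuspCoeff_eq hM hK hab rfl rfl
  have hsum : Summable fun p : ZMod M × ℤ ↦ H (e p) := by
    simp only [← he]
    refine .of_norm ((summable_prod_of_nonneg fun _ ↦ norm_nonneg _).2 ⟨fun l ↦ ?_, ?_⟩)
    · exact (hC.summable_cuspCoeff l.val).norm
    · exact Summable.of_finite
  have hH : Summable H := e.summable_iff.1 hsum
  calc ∑ l : ZMod M, ∑' s, cuspCoeff M K C l.val s
      = ∑' p : ZMod M × ℤ, H (e p) := by
        rw [hsum.tsum_prod, tsum_fintype]
        simp only [← he]
    _ = ∑' q, H q := e.tsum_eq H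
    _ = ∑' ρ, ∑ j, H (ρ, j) := by
        rw [hH.tsum_prod]
        simp only [tsum_fintype]
    _ = ∑' ρ, CoeffU (M * K) t C (-ρ ^ 2) (lstar a b ρ) := by
        simp only [CoeffU_eq_sum hM hK, H]

lemma IsFinitePartCoeffs.sum_tsum_cuspCoeff_eq_Rfactor [NeZero M]
    (hC : IsFinitePartCoeffs (M * K) φ C) :
    ∑ l : ZMod M, ∑' s, cuspCoeff M K C l.val s = Rfactor (M * K) C M K := by
  have : NeZero (M.gcd K) := ⟨Nat.gcd_ne_zero_left (NeZero.ne M)⟩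
  exact hC.sum_tsum_cuspCoeff (Nat.mul_div_cancel' (Nat.gcd_dvd_left M K)).symm
    (Nat.mul_div_cancel' (Nat.gcd_dvd_right M K)).symm
    (Nat.coprime_div_gcd_div_gcd (NeZero.pos (M.gcd K)))

end Reindexing

lemma IsFinitePartCoeffs.hasConstantTerm_torsionSum {M K : ℕ} [NeZero M] {φ : ℂ → ℂ → ℂ}
    {C : ℤ → ℤ → ℂ} (hC : IsFinitePartCoeffs (M * K) φ C) (hφ : IsStandardForm (M * K) φ) :
    HasConstantTerm M (torsionSum M K φ)
      (M * Rfactor (M * K) C M K + (1 - M ^ 2) / 12 + -1 / 12) := by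
  have hsum := (hC.hasConstantTerm_sum_torsionValue.add
    (hasConstantTerm_sum_torsionValue_A2sum (K := K))).add (.const M (-1 / 12))
  rw [hC.sum_tsum_cuspCoeff_eq_Rfactor] at hsum
  refine hsum.congr fun τ hτ ↦ ?_
  rw [hC.torsionSum_eq hφ hτ, Finset.sum_add_distrib]
  ring

/-- Theorem: for every standard index-`m` form `φ` with finite part `Φ = φ - A_{2,m}`
(coefficient data `C`), and every unordered factorization `m = m₁·m₂`, one has
`R_{m₁,m₂}(Φ) = (m₁ + m₂)/12`. -/
theorem residues_of_finite_part (m : ℕ) (hm : 0 < m)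
    (φ : ℂ → ℂ → ℂ) (hφ : IsStandardForm m φ)
    (C : ℤ → ℤ → ℂ) (hC : IsFinitePartCoeffs m φ C) :
    ∀ m₁ m₂ : ℕ, m₁ * m₂ = m → Rfactor m C m₁ m₂ = ((m₁ : ℂ) + (m₂ : ℂ)) / 12 := by
  rintro M K rfl
  have : NeZero M := ⟨left_ne_zero_of_mul hm.ne'⟩
  have hM : (M : ℂ) ≠ 0 := NeZero.ne _
  have hconst : M * Rfactor (M * K) C M K + (1 - (M : ℂ) ^ 2) / 12 + -1 / 12 =
      M * K / (2 * Real.pi * I) * Real.pi * I / 6 :=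
    (hC.hasConstantTerm_torsionSum hφ).eq_of_quasimodular
      (fun _ hτ ↦ hφ.torsionSum_add_one hτ) fun _ hτ ↦ hφ.torsionSum_neg_inv hτ
  have hπ : (Real.pi : ℂ) ≠ 0 := by simp [Real.pi_ne_zero]
  have hcancel : M * K / (2 * Real.pi * I) * Real.pi * I / 6 = (M * K : ℂ) / 12 := by
    field_simp
    ring
  apply mul_left_cancel₀ hM
  linear_combination hconst + hcancel
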